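/- Let p be a prime and L a finite connected simplicial complex. Then there exist an integer m, a finite simplicial complex L̂, and a simplicial action of (Z/pZ)^m on L̂ whose orbit space is a subdivision of L, such that the orbit map f: L̂ → L has the following property: for each simplex σ of L, the inclusion f^{-1}(∂σ) → f^{-1}(σ) induces an isomorphism on H_1(−; Z/pZ). -/

import Mathlib

open Set Function

open scoped ENNReal

noncomputable section

/-! ### Alexander–Spanier (Čech) cohomology -/

namespace AS

variable (A : Type*) [AddCommGroup A]

/-- Alexander–Spanier `n`-cochains on `X` with coefficients in `A`. -/
abbrev Cochain (X : Type*) (n : ℕ) : Type _ := (Fin (n + 1) → X) → A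

/-- The Alexander–Spanier coboundary operator. -/
def d (X : Type*) (n : ℕ) : Cochain A X n →+ Cochain A X (n + 1) :=
  AddMonoidHom.mk' (fun φ s => ∑ i : Fin (n + 2), ((-1 : ℤ) ^ (i : ℕ)) • φ (s ∘ i.succAbove))
    (fun φ ψ => funext fun s => by
      simp [smul_add, Finset.sum_add_distrib])

/-- An open cover of `X`. -/
def IsOpenCover {X : Type*} [TopologicalSpace X] (U : Set (Set X)) : Prop :=
  (∀ u ∈ U, IsOpen u) ∧ ⋃₀ U = univ

/-- A tuple is `U`-small if it is contained in a single member of `U`. -/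
def Small {X : Type*} (U : Set (Set X)) {k : ℕ} (s : Fin k → X) : Prop :=
  ∃ u ∈ U, ∀ i, s i ∈ u

/-- The subgroup of cochains vanishing on all tuples that are small with respect to
some open cover (i.e. vanishing in a neighbourhood of the diagonal). -/
def locZero (X : Type*) [TopologicalSpace X] (n : ℕ) : AddSubgroup (Cochain A X n) where
  carrier := {φ | ∃ U, IsOpenCover U ∧ ∀ s : Fin (n + 1) → X, Small U s → φ s = 0}
  zero_mem' := ⟨{univ}, ⟨fun u hu => by rw [mem_singleton_iff] at hu; rw [hu]; exact isOpen_univ,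
      by simp⟩, fun s _ => rfl⟩
  add_mem' := by
    rintro φ ψ ⟨U, ⟨hUo, hUc⟩, hφ⟩ ⟨W, ⟨hWo, hWc⟩, hψ⟩
    refine ⟨(fun p : Set X × Set X => p.1 ∩ p.2) '' (U ×ˢ W), ⟨?_, ?_⟩, ?_⟩
    · rintro _ ⟨⟨u, w⟩, ⟨hu, hw⟩, rfl⟩
      exact (hUo u hu).inter (hWo w hw)
    · apply eq_univ_of_forall
      intro x
      have hx1 : x ∈ ⋃₀ U := hUc ▸ mem_univ x
      have hx2 : x ∈ ⋃₀ W := hWc ▸ mem_univ x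
      obtain ⟨u, hu, hxu⟩ := hx1
      obtain ⟨w, hw, hxw⟩ := hx2
      exact ⟨u ∩ w, ⟨⟨u, w⟩, ⟨hu, hw⟩, rfl⟩, hxu, hxw⟩
    · rintro s ⟨_, ⟨⟨u, w⟩, ⟨hu, hw⟩, rfl⟩, hs⟩
      have h1 : φ s = 0 := hφ s ⟨u, hu, fun i => (hs i).1⟩
      have h2 : ψ s = 0 := hψ s ⟨w, hw, fun i => (hs i).2⟩
      show φ s + ψ s = 0
      rw [h1, h2, add_zero]
  neg_mem' := by
    rintro φ ⟨U, hU, hφ⟩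
    exact ⟨U, hU, fun s hs => by show -φ s = 0; rw [hφ s hs, neg_zero]⟩

/-- The Alexander–Spanier cochain complex: cochains modulo locally zero cochains. -/
abbrev QC (X : Type*) [TopologicalSpace X] (n : ℕ) : Type _ := Cochain A X n ⧸ locZero A X n

lemma d_locZero (X : Type*) [TopologicalSpace X] (n : ℕ) :
    locZero A X n ≤ (locZero A X (n + 1)).comap (d A X n) := by
  rintro φ ⟨U, hU, hφ⟩
  refine ⟨U, hU, fun s ⟨u, hu, hs⟩ => ?_⟩
  show (d A X n φ) s = 0
  have : ∀ i : Fin (n + 2), φ (s ∘ i.succAbove) = 0 :=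
    fun i => hφ _ ⟨u, hu, fun j => hs _⟩
  simp only [d, AddMonoidHom.mk'_apply]
  exact Finset.sum_eq_zero fun i _ => by rw [this i, smul_zero]

/-- The induced differential on the Alexander–Spanier complex. -/
def dQ (X : Type*) [TopologicalSpace X] (n : ℕ) : QC A X n →+ QC A X (n + 1) :=
  QuotientAddGroup.map _ _ (d A X n) (d_locZero A X n)

/-- Cocycles. -/
def cocycles (X : Type*) [TopologicalSpace X] (n : ℕ) : AddSubgroup (QC A X n) :=
  (dQ A X n).ker

/-- Coboundaries (the trivial subgroup in degree `0`). -/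
def cobounds (X : Type*) [TopologicalSpace X] (n : ℕ) : AddSubgroup (QC A X n) :=
  match n with
  | 0 => ⊥
  | (m + 1) => (dQ A X m).range

/-- Alexander–Spanier cohomology of `X` with coefficients in `A`; for paracompact Hausdorff
(e.g. metric) spaces this is naturally isomorphic to Čech cohomology. -/
def ASH (n : ℕ) (X : Type*) [TopologicalSpace X] : Type _ :=
  ↥(cocycles A X n) ⧸ ((cobounds A X n).comap (cocycles A X n).subtype)

instance (n : ℕ) (X : Type*) [TopologicalSpace X] : AddCommGroup (ASH A n X) :=
  inferInstanceAs (AddCommGroup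
    (↥(cocycles A X n) ⧸ ((cobounds A X n).comap (cocycles A X n).subtype)))

end AS

namespace AS

variable (A : Type*) [AddCommGroup A]

/-- Pullback of Alexander–Spanier cochains along a map. -/
def pull {X Y : Type*} (f : X → Y) (n : ℕ) : Cochain A Y n →+ Cochain A X n :=
  AddMonoidHom.mk' (fun φ s => φ (f ∘ s)) (fun φ ψ => rfl)

lemma pull_d {X Y : Type*} (f : X → Y) (n : ℕ) (φ : Cochain A Y n) :
    pull A f (n + 1) (d A Y n φ) = d A X n (pull A f n φ) := rfl

lemma pull_locZero {X Y : Type*} [TopologicalSpace X] [TopologicalSpace Y] {f : X → Y}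
    (hf : Continuous f) (n : ℕ) :
    locZero A Y n ≤ (locZero A X n).comap (pull A f n) := by
  rintro φ ⟨U, ⟨hUo, hUc⟩, hφ⟩
  refine ⟨(f ⁻¹' ·) '' U, ⟨?_, ?_⟩, ?_⟩
  · rintro _ ⟨u, hu, rfl⟩
    exact (hUo u hu).preimage hf
  · apply eq_univ_of_forall
    intro x
    have : f x ∈ ⋃₀ U := hUc ▸ mem_univ _
    obtain ⟨u, hu, hx⟩ := this
    exact ⟨f ⁻¹' u, ⟨u, hu, rfl⟩, hx⟩
  · rintro s ⟨_, ⟨u, hu, rfl⟩, hs⟩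
    exact hφ _ ⟨u, hu, fun i => hs i⟩

/-- Pullback on the Alexander–Spanier complex. -/
def pullQ {X Y : Type*} [TopologicalSpace X] [TopologicalSpace Y] {f : X → Y}
    (hf : Continuous f) (n : ℕ) : QC A Y n →+ QC A X n :=
  QuotientAddGroup.map _ _ (pull A f n) (pull_locZero A hf n)

lemma pullQ_d {X Y : Type*} [TopologicalSpace X] [TopologicalSpace Y] {f : X → Y}
    (hf : Continuous f) (n : ℕ) (x : QC A Y n) :
    pullQ A hf (n + 1) (dQ A Y n x) = dQ A X n (pullQ A hf n x) := by
  refine QuotientAddGroup.induction_on x ?_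
  intro φ
  simp only [pullQ, dQ, QuotientAddGroup.map_mk, pull_d]

lemma pullQ_cocycles {X Y : Type*} [TopologicalSpace X] [TopologicalSpace Y] {f : X → Y}
    (hf : Continuous f) (n : ℕ) {x : QC A Y n} (hx : x ∈ cocycles A Y n) :
    pullQ A hf n x ∈ cocycles A X n := by
  have : dQ A Y n x = 0 := hx
  show dQ A X n (pullQ A hf n x) = 0
  rw [← pullQ_d, this, map_zero]

lemma pullQ_cobounds {X Y : Type*} [TopologicalSpace X] [TopologicalSpace Y] {f : X → Y}
    (hf : Continuous f) (n : ℕ) {x : QC A Y n} (hx : x ∈ cobounds A Y n) :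
    pullQ A hf n x ∈ cobounds A X n := by
  match n with
  | 0 =>
    have : x = 0 := hx
    rw [this, map_zero]
    exact (⊥ : AddSubgroup (QC A X 0)).zero_mem
  | (m + 1) =>
    obtain ⟨y, rfl⟩ := hx
    exact ⟨pullQ A hf m y, (pullQ_d A hf m y).symm⟩

/-- The map on cocycles induced by a continuous map. -/
def pullZ {X Y : Type*} [TopologicalSpace X] [TopologicalSpace Y] {f : X → Y}
    (hf : Continuous f) (n : ℕ) : ↥(cocycles A Y n) →+ ↥(cocycles A X n) :=
  AddMonoidHom.codRestrict ((pullQ A hf n).comp (cocycles A Y n).subtype) _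
    (fun x => pullQ_cocycles A hf n x.2)

/-- The homomorphism induced on Alexander–Spanier (Čech) cohomology by a continuous map.
Note the contravariance: a map `f : X → Y` induces `ASHmap : ASH A n Y →+ ASH A n X`. -/
def ASHmap {X Y : Type*} [TopologicalSpace X] [TopologicalSpace Y] {f : X → Y}
    (hf : Continuous f) (n : ℕ) : ASH A n Y →+ ASH A n X :=
  QuotientAddGroup.map _ _ (pullZ A hf n) (by
    rintro ⟨x, hx⟩ hmem
    have : x ∈ cobounds A Y n := hmem
    exact pullQ_cobounds A hf n this)

end AS

namespace AS

variable (A : Type*) [AddCommGroup A]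

/-- Čech cohomology with compact supports: for compact `B` this is the (Alexander–Spanier =
Čech) cohomology of `B` itself, and for noncompact `B` it is that of the one-point
compactification of `B`. -/
def Hc (n : ℕ) (B : Type*) [TopologicalSpace B] : Type _ :=
  open scoped Classical in
  if CompactSpace B then ASH A n B else ASH A n (OnePoint B)

end AS

/-- The cohomological dimension `dim_A X` of a space `X` with respect to an abelian group `A`:
the supremum of the integers `n` for which there is a locally compact subset `B ⊆ X` with
`H^n_c(B; A) ≠ 0`. -/
noncomputable def cohDim (A : Type*) [AddCommGroup A] (X : Type*) [TopologicalSpace X] : ℕ∞ :=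
  sSup {e : ℕ∞ | ∃ n : ℕ, e = (n : ℕ∞) ∧
    ∃ B : Set X, LocallyCompactSpace B ∧ Nontrivial (AS.Hc A n B)}

/-! ### Finite simplicial complexes and their geometric realizations -/

/-- An abstract simplicial complex on a finite vertex set `V`. -/
structure FinSimpComplex (V : Type*) [Fintype V] [DecidableEq V] where
  faces : Finset (Finset V)
  nonempty_of_mem : ∀ s ∈ faces, s.Nonempty
  down_closed : ∀ s ∈ faces, ∀ t, t ⊆ s → t.Nonempty → t ∈ faces

namespace FinSimpComplex

variable {V : Type*} [Fintype V] [DecidableEq V] (K : FinSimpComplex V)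

/-- The geometric realization `|K|` of `K`, as a subspace of `ℝ^V`
(barycentric coordinates). -/
def space : Set (V → ℝ) :=
  {w | (∀ v, 0 ≤ w v) ∧ (∑ v, w v) = 1 ∧ ∃ s ∈ K.faces, ∀ v, w v ≠ 0 → v ∈ s}

/-- The closed geometric simplex of `σ` inside `|K|`. -/
def geomSimplex (σ : Finset V) : Set ↥K.space := {x | ∀ v, x.val v ≠ 0 → v ∈ σ}

/-- The geometric boundary `∂σ` of the simplex `σ` inside `|K|`:
points of the simplex supported in a proper face. -/
def geomBoundary (σ : Finset V) : Set ↥K.space :=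
  {x | (∀ v, x.val v ≠ 0 → v ∈ σ) ∧ ∃ v ∈ σ, x.val v = 0}

lemma geomBoundary_subset (σ : Finset V) : K.geomBoundary σ ⊆ K.geomSimplex σ :=
  fun _ hx => hx.1

lemma perm_mem {e : V ≃ V} (he : ∀ s ∈ K.faces, s.image e ∈ K.faces) {w : V → ℝ}
    (hw : w ∈ K.space) : (fun v => w (e.symm v)) ∈ K.space := by
  obtain ⟨hnn, hsum, s, hs, hsupp⟩ := hw
  refine ⟨fun v => hnn _, ?_, s.image e, he s hs, ?_⟩
  · rw [← hsum]
    exact Fintype.sum_equiv e.symm _ _ (fun v => rfl)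
  · intro v hv
    exact Finset.mem_image.mpr ⟨e.symm v, hsupp _ hv, e.apply_symm_apply v⟩

/-- The simplicial homeomorphism of `|K|` induced by a face-preserving permutation of the
vertices. -/
def permAct {e : V ≃ V} (he : ∀ s ∈ K.faces, s.image e ∈ K.faces) :
    ↥K.space → ↥K.space :=
  fun x => ⟨fun v => x.val (e.symm v), K.perm_mem he x.2⟩

lemma permAct_continuous {e : V ≃ V} (he : ∀ s ∈ K.faces, s.image e ∈ K.faces) :
    Continuous (K.permAct he) := by
  apply Continuous.subtype_mk
  exact continuous_pi fun v => (continuous_apply (e.symm v)).comp continuous_subtype_val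

/-- The action of a group element on `|K|`, for a simplicial action of `G` on the vertices. -/
def gAct {G : Type*} [Group G] [MulAction G V]
    (hsimp : ∀ g : G, ∀ s ∈ K.faces, s.image (g • ·) ∈ K.faces) (g : G) :
    ↥K.space → ↥K.space :=
  K.permAct (e := MulAction.toPerm g) (by
    intro s hs
    have := hsimp g s hs
    simpa [MulAction.toPerm] using this)

lemma gAct_continuous {G : Type*} [Group G] [MulAction G V]
    (hsimp : ∀ g : G, ∀ s ∈ K.faces, s.image (g • ·) ∈ K.faces) (g : G) :
    Continuous (K.gAct hsimp g) :=
  K.permAct_continuous _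

end FinSimpComplex

namespace AS

section LocalCochains

variable {A : Type*} [AddCommGroup A] {X Y : Type*} [TopologicalSpace X] [TopologicalSpace Y]

/-- `φ` satisfies the cocycle identity on all sufficiently small triples. -/
def IsLocCocycle (φ : X → X → A) : Prop :=
  ∀ x₀, ∃ u ∈ nhds x₀, ∀ x ∈ u, ∀ y ∈ u, ∀ z ∈ u, φ x z = φ x y + φ y z

/-- `φ` is the coboundary of `g` on all sufficiently small pairs. -/
def IsLocPotential (φ : X → X → A) (g : X → A) : Prop :=
  ∀ x₀, ∃ u ∈ nhds x₀, ∀ x ∈ u, ∀ y ∈ u, φ x y = g y - g x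

lemma mem_locZero_iff {n : ℕ} {φ : Cochain A X n} :
    φ ∈ locZero A X n ↔ ∀ x₀, ∃ u ∈ nhds x₀, ∀ s : Fin (n + 1) → X, (∀ i, s i ∈ u) → φ s = 0 := by
  constructor
  · rintro ⟨U, ⟨hUo, hUc⟩, hU⟩ x₀
    obtain ⟨u, hu, hx⟩ : x₀ ∈ ⋃₀ U := hUc ▸ mem_univ x₀
    exact ⟨u, (hUo u hu).mem_nhds hx, fun s hs => hU s ⟨u, hu, hs⟩⟩
  · intro h
    refine ⟨{u | IsOpen u ∧ ∀ s : Fin (n + 1) → X, (∀ i, s i ∈ u) → φ s = 0},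
      ⟨fun u hu => hu.1, eq_univ_of_forall fun x => ?_⟩, ?_⟩
    · obtain ⟨u, hu, h'⟩ := h x
      obtain ⟨v, hvu, hvo, hxv⟩ := mem_nhds_iff.1 hu
      exact ⟨v, ⟨hvo, fun s hs => h' s fun i => hvu (hs i)⟩, hxv⟩
    · rintro s ⟨u, hu, hs⟩
      exact hu.2 s hs

omit [TopologicalSpace X] in
lemma d_zero_apply (g : Cochain A X 0) (s : Fin 2 → X) :
    d A X 0 g s = g ![s 1] - g ![s 0] := by
  have h0 : s ∘ Fin.succ = ![s 1] := by ext i; fin_cases i; rfl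
  have h1 : s ∘ Fin.succAbove (1 : Fin 2) = ![s 0] := by ext i; fin_cases i; rfl
  simp [d, Fin.sum_univ_succ, h0, h1, sub_eq_add_neg]

omit [TopologicalSpace X] in
lemma d_one_apply (φ : Cochain A X 1) (s : Fin 3 → X) :
    d A X 1 φ s = φ ![s 1, s 2] - φ ![s 0, s 2] + φ ![s 0, s 1] := by
  have h0 : s ∘ Fin.succ = ![s 1, s 2] := by ext i; fin_cases i <;> rfl
  have h1 : s ∘ Fin.succAbove (1 : Fin 3) = ![s 0, s 2] := by ext i; fin_cases i <;> rfl
  have h2 : s ∘ Fin.succAbove (2 : Fin 3) = ![s 0, s 1] := by ext i; fin_cases i <;> rfl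
  simp [d, Fin.sum_univ_succ, h0, h1, h2, sub_eq_add_neg, add_assoc]

lemma d_one_mem_locZero_iff (φ : Cochain A X 1) :
    d A X 1 φ ∈ locZero A X 2 ↔ IsLocCocycle fun x y => φ ![x, y] := by
  rw [mem_locZero_iff]
  refine forall_congr' fun x₀ => exists_congr fun u => and_congr_right fun _ => ⟨?_, ?_⟩
  · intro h x hx y hy z hz
    have := h ![x, y, z] (by intro i; fin_cases i <;> assumption)
    rw [d_one_apply] at this
    simp only [Matrix.cons_val] at this
    rw [← sub_eq_zero, ← neg_eq_zero, ← this]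
    abel
  · intro h s hs
    have := h (s 0) (hs 0) (s 1) (hs 1) (s 2) (hs 2)
    dsimp only at this
    rw [d_one_apply, this]
    abel

lemma sub_d_zero_mem_locZero_iff (φ : Cochain A X 1) (g : Cochain A X 0) :
    φ - d A X 0 g ∈ locZero A X 1 ↔
      IsLocPotential (fun x y => φ ![x, y]) fun x => g ![x] := by
  rw [mem_locZero_iff]
  refine forall_congr' fun x₀ => exists_congr fun u => and_congr_right fun _ => ⟨?_, ?_⟩
  · intro h x hx y hy
    have := h ![x, y] (by intro i; fin_cases i <;> assumption)
    rw [Pi.sub_apply, d_zero_apply] at this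
    exact sub_eq_zero.1 this
  · intro h s hs
    have hs' : s = ![s 0, s 1] := by ext i; fin_cases i <;> rfl
    rw [Pi.sub_apply, d_zero_apply, sub_eq_zero]
    exact (congrArg φ hs').trans (h (s 0) (hs 0) (s 1) (hs 1))

lemma mk_mem_cocycles_one_iff (φ : Cochain A X 1) :
    (QuotientAddGroup.mk φ : QC A X 1) ∈ cocycles A X 1 ↔ IsLocCocycle fun x y => φ ![x, y] := by
  rw [← d_one_mem_locZero_iff]
  exact QuotientAddGroup.eq_zero_iff (N := locZero A X 2) (d A X 1 φ)

lemma mk_mem_cobounds_one_iff (φ : Cochain A X 1) :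
    (QuotientAddGroup.mk φ : QC A X 1) ∈ cobounds A X 1 ↔
      ∃ g : X → A, IsLocPotential (fun x y => φ ![x, y]) g := by
  constructor
  · rintro ⟨g, hg⟩
    obtain ⟨g, rfl⟩ := QuotientAddGroup.mk_surjective g
    refine ⟨fun x => g ![x], (sub_d_zero_mem_locZero_iff φ g).1 ?_⟩
    rw [← QuotientAddGroup.eq_zero_iff, QuotientAddGroup.mk_sub, sub_eq_zero]
    exact hg.symm
  · rintro ⟨g, hg⟩
    refine ⟨QuotientAddGroup.mk fun s => g (s 0), ?_⟩
    have := (sub_d_zero_mem_locZero_iff φ fun s => g (s 0)).2 hg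
    rw [← QuotientAddGroup.eq_zero_iff, QuotientAddGroup.mk_sub, sub_eq_zero] at this
    exact this.symm

lemma ASHmap_one_injective {f : X → Y} (hf : Continuous f)
    (h : ∀ φ : Y → Y → A, IsLocCocycle φ →
      (∃ g : X → A, IsLocPotential (fun x y => φ (f x) (f y)) g) →
        ∃ g : Y → A, IsLocPotential φ g) :
    Injective (ASHmap A hf 1) := by
  rw [injective_iff_map_eq_zero]
  intro c hc
  obtain ⟨⟨q, hq⟩, rfl⟩ := QuotientAddGroup.mk_surjective c
  obtain ⟨φ, rfl⟩ := QuotientAddGroup.mk_surjective q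
  have h1 : (QuotientAddGroup.mk (pull A f 1 φ) : QC A X 1) ∈ cobounds A X 1 :=
    (QuotientAddGroup.eq_zero_iff (N := (cobounds A X 1).comap (cocycles A X 1).subtype)
      (pullZ A hf 1 ⟨_, hq⟩)).1 hc
  rw [mk_mem_cobounds_one_iff] at h1
  have key : ∀ x y, pull A f 1 φ ![x, y] = φ ![f x, f y] := fun x y =>
    congrArg φ (by ext i; fin_cases i <;> rfl)
  simp only [key] at h1
  exact (QuotientAddGroup.eq_zero_iff
    (N := (cobounds A Y 1).comap (cocycles A Y 1).subtype) _).2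
    ((mk_mem_cobounds_one_iff φ).2 (h _ ((mk_mem_cocycles_one_iff φ).1 hq) h1))

lemma ASHmap_one_surjective {f : X → Y} (hf : Continuous f)
    (h : ∀ ψ : X → X → A, IsLocCocycle ψ →
      ∃ φ : Y → Y → A, IsLocCocycle φ ∧
        ∃ g : X → A, IsLocPotential (fun x y => φ (f x) (f y) - ψ x y) g) :
    Surjective (ASHmap A hf 1) := by
  intro c
  obtain ⟨⟨q, hq⟩, rfl⟩ := QuotientAddGroup.mk_surjective c
  obtain ⟨ψ, rfl⟩ := QuotientAddGroup.mk_surjective q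
  obtain ⟨φ, hφ, hg⟩ := h _ ((mk_mem_cocycles_one_iff ψ).1 hq)
  have hφ' := (mk_mem_cocycles_one_iff fun s => φ (s 0) (s 1)).2 hφ
  refine ⟨QuotientAddGroup.mk ⟨_, hφ'⟩, ?_⟩
  have h1 := (mk_mem_cobounds_one_iff (pull A f 1 (fun s => φ (s 0) (s 1)) - ψ)).2 hg
  refine sub_eq_zero.1 ?_
  exact (QuotientAddGroup.eq_zero_iff
    (N := (cobounds A X 1).comap (cocycles A X 1).subtype)
    (pullZ A hf 1 ⟨_, hφ'⟩ - ⟨_, hq⟩)).2 h1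

end LocalCochains

end AS

namespace FinSimpComplex

variable {W : Type*} [Fintype W] [DecidableEq W] (K : FinSimpComplex W)

lemma isCompact_space : IsCompact K.space := by
  have h : K.space = ⋃ s ∈ K.faces,
      {w : W → ℝ | (∀ v, 0 ≤ w v) ∧ (∑ v, w v) = 1 ∧ ∀ v, w v ≠ 0 → v ∈ s} := by
    ext w
    simp only [space, mem_ofPred_eq, mem_iUnion, exists_prop]
    exact ⟨fun ⟨h1, h2, s, hs, h3⟩ => ⟨s, hs, h1, h2, h3⟩,
      fun ⟨s, hs, h1, h2, h3⟩ => ⟨h1, h2, s, hs, h3⟩⟩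
  rw [h]
  refine K.faces.finite_toSet.isCompact_biUnion fun s _ => ?_
  refine IsCompact.of_isClosed_subset (isCompact_Icc (a := (0 : W → ℝ)) (b := 1)) ?_ ?_
  · have hc : {w : W → ℝ | (∀ v, 0 ≤ w v) ∧ (∑ v, w v) = 1 ∧ ∀ v, w v ≠ 0 → v ∈ s} =
        (⋂ v, {w : W → ℝ | 0 ≤ w v}) ∩ ({w : W → ℝ | (∑ v, w v) = 1} ∩
          ⋂ v, ⋂ (_ : v ∉ s), {w : W → ℝ | w v = 0}) := by
      ext w
      simp only [mem_ofPred_eq, mem_inter_iff, mem_iInter]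
      exact and_congr_right fun _ => and_congr_right fun _ => forall_congr' fun v => by tauto
    rw [hc]
    refine (isClosed_iInter fun v => isClosed_le continuous_const (continuous_apply v)).inter
      ((isClosed_eq (by fun_prop) continuous_const).inter
        (isClosed_iInter fun v => isClosed_iInter fun _ =>
          isClosed_eq (continuous_apply v) continuous_const))
  · rintro w ⟨h1, h2, -⟩
    exact ⟨h1, fun v =>
      (Finset.single_le_sum (fun v _ => h1 v) (Finset.mem_univ v)).trans_eq h2⟩

variable {K} in
lemma le_one_of_mem_space {y : W → ℝ} (hy : y ∈ K.space) (v : W) : y v ≤ 1 :=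
  hy.2.1 ▸ Finset.single_le_sum (fun v _ => hy.1 v) (Finset.mem_univ v)

/-- The vertices in `s` together with the support of `y` lie in a common face. -/
def Joinable (s : Finset W) (y : W → ℝ) : Prop :=
  ∃ t ∈ K.faces, s ⊆ t ∧ ∀ v, y v ≠ 0 → v ∈ t

/-- The point at time `t` on the segment from the vertex `w` to `y`. -/
def seg (w : W) (y : W → ℝ) (t : ℝ) : W → ℝ :=
  fun v => (1 - t) * (Pi.single w 1 : W → ℝ) v + t * y v

omit [Fintype W] in
lemma seg_zero (w : W) (y : W → ℝ) : seg w y 0 = Pi.single w 1 := by ext v; simp [seg]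

omit [Fintype W] in
lemma seg_one (w : W) (y : W → ℝ) : seg w y 1 = y := by ext v; simp [seg]

omit [Fintype W] in
lemma seg_single (w : W) (t : ℝ) : seg w (Pi.single w 1) t = Pi.single w 1 := by
  ext v; simp only [seg]; ring

omit [Fintype W] in
lemma single_mem_Icc (w v : W) : (Pi.single w 1 : W → ℝ) v ∈ Icc (0 : ℝ) 1 := by
  by_cases h : v = w
  · subst h; simp
  · simp [h]

variable {K}

lemma Joinable.mono {s s' : Finset W} {y : W → ℝ} (h : K.Joinable s y) (hs : s' ⊆ s) :
    K.Joinable s' y :=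
  let ⟨t, ht, h1, h2⟩ := h
  ⟨t, ht, hs.trans h1, h2⟩

lemma joinable_of_support {s : Finset W} {y : W → ℝ} (hy : y ∈ K.space)
    (hs : ∀ v ∈ s, y v ≠ 0) : K.Joinable s y :=
  let ⟨t, ht, h⟩ := hy.2.2
  ⟨t, ht, fun v hv => h v (hs v hv), h⟩

lemma joinable_single {s : Finset W} {w : W} (h : insert w s ∈ K.faces) :
    K.Joinable s (Pi.single w 1) := by
  refine ⟨_, h, Finset.subset_insert _ _, fun v hv => ?_⟩
  by_contra hne
  exact hv (Pi.single_eq_of_ne (fun e => hne (by simp [e])) _)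

lemma Joinable.seg {s : Finset W} {y : W → ℝ} (h : K.Joinable s y) {w : W} (hw : w ∈ s) (t : ℝ) :
    K.Joinable s (seg w y t) := by
  obtain ⟨u, hu, h1, h2⟩ := h
  refine ⟨u, hu, h1, fun v hv => ?_⟩
  by_contra hvu
  have hvw : v ≠ w := fun e => hvu (e ▸ h1 hw)
  have : y v = 0 := by by_contra h0; exact hvu (h2 v h0)
  exact hv (by simp [FinSimpComplex.seg, hvw, this])

lemma single_mem_space {w : W} (h : {w} ∈ K.faces) : (Pi.single w 1 : W → ℝ) ∈ K.space := by
  refine ⟨fun v => (single_mem_Icc w v).1, by simp, _, h, fun v hv => ?_⟩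
  by_contra hne
  exact hv (Pi.single_eq_of_ne (by simpa using hne) _)

lemma seg_mem_space {w : W} {y : W → ℝ} (hy : y ∈ K.space) (h : K.Joinable {w} y) {t : ℝ}
    (ht : t ∈ Icc (0 : ℝ) 1) : seg w y t ∈ K.space := by
  refine ⟨fun v => ?_, ?_, ?_⟩
  · have h1 := (single_mem_Icc w v).1
    have h2 := hy.1 v
    have h3 := ht.1
    have h4 : 0 ≤ 1 - t := sub_nonneg.2 ht.2
    simp only [FinSimpComplex.seg]
    positivity
  · simp only [FinSimpComplex.seg, Finset.sum_add_distrib, ← Finset.mul_sum, hy.2.1]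
    simp
  · obtain ⟨u, hu, -, h⟩ := h.seg (Finset.mem_singleton_self w) t
    exact ⟨u, hu, h⟩

lemma dist_seg_seg_le {w : W} {y : W → ℝ} (hy : y ∈ K.space) (t t' : ℝ) :
    dist (seg w y t) (seg w y t') ≤ |t - t'| := by
  refine (dist_pi_le_iff (abs_nonneg _)).2 fun v => ?_
  have h1 := single_mem_Icc w v
  have h2 := hy.1 v
  have h3 := le_one_of_mem_space hy v
  rw [Real.dist_eq, show seg w y t v - seg w y t' v =
    (t - t') * (y v - (Pi.single w 1 : W → ℝ) v) by simp only [seg]; ring, abs_mul]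
  refine mul_le_of_le_one_right (abs_nonneg _) (abs_le.2 ⟨?_, ?_⟩) <;> linarith [h1.1, h1.2]

lemma dist_seg_le (w : W) (y y' : W → ℝ) {t : ℝ} (ht : t ∈ Icc (0 : ℝ) 1) :
    dist (seg w y t) (seg w y' t) ≤ dist y y' := by
  refine (dist_pi_le_iff dist_nonneg).2 fun v => ?_
  rw [Real.dist_eq, show seg w y t v - seg w y' t v = t * (y v - y' v) by simp only [seg]; ring,
    abs_mul, abs_of_nonneg ht.1]
  exact (mul_le_of_le_one_left (abs_nonneg _) ht.2).trans
    ((Real.dist_eq _ _).symm.le.trans (dist_le_pi_dist y y' v))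

variable {A : Type*} [AddCommGroup A]

/-- Sum of the values of `ψ` along the subdivision into `N` steps of the segment from `w` to `y`. -/
def segSum (ψ : (W → ℝ) → (W → ℝ) → A) (N : ℕ) (w : W) (y : W → ℝ) : A :=
  ∑ i ∈ Finset.range N, ψ (seg w y (i / N)) (seg w y ((i + 1 : ℕ) / N))

variable (K) in
/-- `ψ` satisfies the cocycle identity on triples of points of `|K|` of size less than `δ`. -/
def IsUniformCocycle (ψ : (W → ℝ) → (W → ℝ) → A) (δ : ℝ) : Prop :=
  ∀ x ∈ K.space, ∀ y ∈ K.space, ∀ z ∈ K.space, dist x y < δ → dist x z < δ →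
    ψ x z = ψ x y + ψ y z

variable (K) in
/-- `a` satisfies the cocycle identity on the triples of vertices spanning a face. -/
def IsSimplicialCocycle (a : W → W → A) : Prop :=
  ∀ u v w, {u, v, w} ∈ K.faces → a u w = a u v + a v w

lemma div_mem_Icc {i N : ℕ} (hi : i ≤ N) : (i / N : ℝ) ∈ Icc (0 : ℝ) 1 :=
  ⟨by positivity, div_le_one_of_le₀ (by exact_mod_cast hi) (by positivity)⟩

lemma dist_seg_step_lt {N : ℕ} {η : ℝ} (hN : 1 / (N : ℝ) < η) {w : W} {y : W → ℝ}
    (hy : y ∈ K.space) (i : ℕ) :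
    dist (seg w y (i / N)) (seg w y ((i + 1 : ℕ) / N)) < η := by
  refine (dist_seg_seg_le hy _ _).trans_lt ?_
  have h : (i / N : ℝ) - ((i + 1 : ℕ) / N : ℝ) = -(1 / N) := by push_cast; ring
  rw [h, abs_neg, abs_of_nonneg (by positivity)]
  exact hN

section Uniform

variable {ψ : (W → ℝ) → (W → ℝ) → A} {δ : ℝ} {N : ℕ}

lemma IsUniformCocycle.self (hψ : K.IsUniformCocycle ψ δ) (hδ : 0 < δ) {x : W → ℝ}
    (hx : x ∈ K.space) : ψ x x = 0 := by
  have := hψ x hx x hx x hx (by simpa) (by simpa)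
  simpa using this

lemma segSum_sub_segSum (hψ : K.IsUniformCocycle ψ δ) (hδ : 0 < δ) (hN : 1 / (N : ℝ) < δ / 2)
    (hN0 : N ≠ 0) {w : W} {x y : W → ℝ} (hx : x ∈ K.space) (hy : y ∈ K.space)
    (hjx : K.Joinable {w} x) (hjy : K.Joinable {w} y) (hxy : dist x y < δ / 2) :
    segSum ψ N w y - segSum ψ N w x = ψ x y := by
  set D : ℕ → A := fun i => ψ (seg w x (i / N)) (seg w y (i / N)) with hD
  have hstep : ∀ i ∈ Finset.range N,
      ψ (seg w y (i / N)) (seg w y ((i + 1 : ℕ) / N)) -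
        ψ (seg w x (i / N)) (seg w x ((i + 1 : ℕ) / N)) = D (i + 1) - D i := by
    intro i hi
    have hi' := Finset.mem_range.1 hi
    have t0 := div_mem_Icc hi'.le
    have t1 := div_mem_Icc (Nat.succ_le_of_lt hi')
    have d1 := dist_seg_step_lt hN (w := w) hx i
    have d2 := (dist_seg_le w x y t0).trans_lt hxy
    have d3 := (dist_seg_le w x y t1).trans_lt hxy
    have d4 := (dist_triangle _ _ _).trans_lt (add_lt_add d1 d3)
    have e1 := hψ _ (seg_mem_space hx hjx t0) _ (seg_mem_space hx hjx t1) _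
      (seg_mem_space hy hjy t1) (by linarith) (by linarith)
    have e2 := hψ _ (seg_mem_space hx hjx t0) _ (seg_mem_space hy hjy t0) _
      (seg_mem_space hy hjy t1) (by linarith) (by linarith)
    simp only [hD]
    rw [sub_eq_sub_iff_add_eq_add]
    rw [add_comm, ← e2, e1, add_comm]
  have hN' : (N : ℝ) ≠ 0 := by exact_mod_cast hN0
  rw [segSum, segSum, ← Finset.sum_sub_distrib, Finset.sum_congr rfl hstep, Finset.sum_range_sub]
  simp only [hD, Nat.cast_zero, zero_div, seg_zero, div_self hN', seg_one]
  have : {w} ∈ K.faces := by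
    obtain ⟨t, ht, h1, -⟩ := hjx
    exact K.down_closed t ht _ h1 (Finset.singleton_nonempty w)
  rw [hψ.self hδ (single_mem_space this), sub_zero]

lemma segSum_single (hψ : K.IsUniformCocycle ψ δ) (hδ : 0 < δ) {w : W} (hw : {w} ∈ K.faces) :
    segSum ψ N w (Pi.single w 1) = 0 :=
  Finset.sum_eq_zero fun i _ => by
    rw [seg_single, seg_single, hψ.self hδ (single_mem_space hw)]

lemma segSum_eq_add (hψ : K.IsUniformCocycle ψ δ) (hδ : 0 < δ) (hN : 1 / (N : ℝ) < δ / 2)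
    (hN0 : N ≠ 0) {u w : W} {x : W → ℝ} (hx : x ∈ K.space) (hj : K.Joinable {u, w} x) :
    segSum ψ N u x = segSum ψ N u (Pi.single w 1) + segSum ψ N w x := by
  have hu : ({u} : Finset W) ⊆ {u, w} := by simp
  have hw : ({w} : Finset W) ⊆ {u, w} := by simp
  have hwK : {w} ∈ K.faces := by
    obtain ⟨t, ht, h1, -⟩ := hj
    exact K.down_closed t ht _ (hw.trans h1) (Finset.singleton_nonempty w)
  have hconst : ∀ i ≤ N, segSum ψ N u (seg w x (i / N)) - segSum ψ N w (seg w x (i / N)) =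
      segSum ψ N u (Pi.single w 1) := by
    intro i
    induction i with
    | zero => intro _; simp [seg_zero, segSum_single hψ hδ hwK]
    | succ i ih =>
      intro hi
      have t0 := div_mem_Icc (Nat.le_of_succ_le hi)
      have t1 := div_mem_Icc hi
      have j := fun t => hj.seg (w := w) (by simp) t
      have m0 := seg_mem_space hx (hj.mono hw) t0
      have m1 := seg_mem_space hx (hj.mono hw) t1
      have d := dist_seg_step_lt hN (w := w) hx i
      have e1 := segSum_sub_segSum hψ hδ hN hN0 m0 m1 ((j _).mono hu) ((j _).mono hu) d
      have e2 := segSum_sub_segSum hψ hδ hN hN0 m0 m1 ((j _).mono hw) ((j _).mono hw) d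
      rw [← ih (Nat.le_of_succ_le hi), sub_eq_sub_iff_sub_eq_sub, e1, e2]
  have hN' : (N : ℝ) ≠ 0 := by exact_mod_cast hN0
  have := hconst N le_rfl
  rw [div_self hN', seg_one] at this
  rw [← this, sub_add_cancel]

end Uniform

/-- Near `x₀`, supports grow and the largest coordinate sits in the support of `x₀`. -/
lemma eventually_support_and_max {x₀ : W → ℝ} (hx₀ : x₀ ∈ K.space) :
    ∃ u ∈ nhds x₀, ∀ x ∈ u, (∀ v, x₀ v ≠ 0 → x v ≠ 0) ∧
      ∀ w, (∀ v, x v ≤ x w) → x₀ w ≠ 0 := by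
  obtain ⟨v₀, hv₀⟩ : ∃ v, x₀ v ≠ 0 := by
    by_contra! h
    have := hx₀.2.1
    simp [h] at this
  have hpos : 0 < x₀ v₀ := lt_of_le_of_ne (hx₀.1 v₀) hv₀.symm
  have h1 : ∀ᶠ x in nhds x₀, ∀ v, x₀ v ≠ 0 → x v ≠ 0 := by
    refine Filter.eventually_all.2 fun v => ?_
    by_cases h : x₀ v = 0
    · simp [h]
    · exact ((continuous_apply v).continuousAt.eventually_ne h).mono fun x hx _ => hx
  have h2 : ∀ᶠ x in nhds x₀, ∀ v, x₀ v = 0 → x v < x v₀ := by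
    refine Filter.eventually_all.2 fun v => ?_
    by_cases h : x₀ v = 0
    · have := ContinuousAt.eventually_lt (f := fun x : W → ℝ => x v) (g := fun x : W → ℝ => x v₀)
        (x₀ := x₀) (continuous_apply v).continuousAt (continuous_apply v₀).continuousAt
        (show x₀ v < x₀ v₀ by rw [h]; exact hpos)
      exact this.mono fun x hx _ => hx
    · simp [h]
  refine ⟨_, h1.and h2, fun x hx => ⟨hx.1, fun w hw h0 => ?_⟩⟩
  exact absurd (hw v₀) (not_le.2 (hx.2 w h0))

lemma exists_one_div_lt {η : ℝ} (hη : 0 < η) : ∃ N : ℕ, N ≠ 0 ∧ 1 / (N : ℝ) < η := by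
  obtain ⟨n, hn⟩ := exists_nat_one_div_lt hη
  exact ⟨n + 1, n.succ_ne_zero, by exact_mod_cast hn⟩

variable {top : (W → ℝ) → W} (htop : ∀ (y : W → ℝ) (v : W), y v ≤ y (top y))
include htop

omit [Fintype W] in
lemma top_single (w : W) : top (Pi.single w 1) = w := by
  by_contra h
  have := htop (Pi.single w 1) w
  rw [Pi.single_eq_same, Pi.single_eq_of_ne h] at this
  linarith

/-- Every uniform cocycle is cohomologous to one induced by a simplicial cocycle. -/
lemma IsUniformCocycle.exists_simplicial {ψ : (W → ℝ) → (W → ℝ) → A} {δ : ℝ} (hδ : 0 < δ)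
    (hψ : K.IsUniformCocycle ψ δ) :
    ∃ a : W → W → A, K.IsSimplicialCocycle a ∧ ∃ g : (W → ℝ) → A, ∀ x₀ ∈ K.space,
      ∃ u ∈ nhds x₀, ∀ x ∈ u, ∀ y ∈ u, x ∈ K.space → y ∈ K.space →
        ψ x y - a (top x) (top y) = g y - g x := by
  obtain ⟨N, hN0, hN⟩ := exists_one_div_lt (half_pos hδ)
  refine ⟨fun u w => segSum ψ N u (Pi.single w 1), ?_, fun x => segSum ψ N (top x) x, ?_⟩
  · intro u v w h
    refine segSum_eq_add hψ hδ hN hN0 (single_mem_space (K.down_closed _ h _ (by simp)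
      (Finset.singleton_nonempty w))) (joinable_single ?_)
    rwa [show insert w {u, v} = ({u, v, w} : Finset W) by ext; simp; tauto]
  · intro x₀ hx₀
    obtain ⟨u, hu, h⟩ := eventually_support_and_max hx₀
    refine ⟨u ∩ Metric.ball x₀ (δ / 4), Filter.inter_mem hu
      (Metric.ball_mem_nhds _ (by linarith)), ?_⟩
    rintro x ⟨hxu, hxb⟩ y ⟨hyu, hyb⟩ hx hy
    have hd : dist x y < δ / 2 := by
      have := dist_triangle_right x y x₀
      rw [Metric.mem_ball] at hxb hyb
      linarith
    have hxt := (h x hxu).2 _ (htop x)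
    have hyt := (h y hyu).2 _ (htop y)
    have e1 := segSum_sub_segSum hψ hδ hN hN0 (w := top x) hx hy
      (joinable_of_support hx (by simpa using (h x hxu).1 _ hxt))
      (joinable_of_support hy (by simpa using (h y hyu).1 _ hxt)) hd
    have e2 := segSum_eq_add hψ hδ hN hN0 (u := top x) (w := top y) hy
      (joinable_of_support hy (by
        simpa using ⟨(h y hyu).1 _ hxt, (h y hyu).1 _ hyt⟩))
    rw [← e1, e2]
    abel

/-- The cochain on `|K|` induced by a simplicial cocycle is locally a cocycle. -/
lemma IsSimplicialCocycle.locally {a : W → W → A} (ha : K.IsSimplicialCocycle a)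
    {x₀ : W → ℝ} (hx₀ : x₀ ∈ K.space) :
    ∃ u ∈ nhds x₀, ∀ x ∈ u, ∀ y ∈ u, ∀ z ∈ u,
      a (top x) (top z) = a (top x) (top y) + a (top y) (top z) := by
  obtain ⟨u, hu, h⟩ := eventually_support_and_max hx₀
  refine ⟨u, hu, fun x hx y hy z hz => ha _ _ _ ?_⟩
  obtain ⟨t, ht, hs⟩ := hx₀.2.2
  refine K.down_closed t ht _ ?_ (by simp)
  simp only [Finset.insert_subset_iff, Finset.singleton_subset_iff]
  exact ⟨hs _ ((h x hx).2 _ (htop x)), hs _ ((h y hy).2 _ (htop y)),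
    hs _ ((h z hz).2 _ (htop z))⟩

/-- A simplicial cocycle whose induced cochain has a potential is a simplicial coboundary. -/
lemma IsSimplicialCocycle.eq_sub {a : W → W → A} (ha : K.IsSimplicialCocycle a)
    {g : (W → ℝ) → A} {δ : ℝ} (hδ : 0 < δ)
    (hg : ∀ x ∈ K.space, ∀ y ∈ K.space, dist x y < δ → a (top x) (top y) = g y - g x)
    {u w : W} (huw : {u, w} ∈ K.faces) :
    a u w = g (Pi.single w 1) - g (Pi.single u 1) := by
  obtain ⟨N, hN0, hN⟩ := exists_one_div_lt hδ
  have hN' : (N : ℝ) ≠ 0 := by exact_mod_cast hN0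
  have hw : (Pi.single w 1 : W → ℝ) ∈ K.space :=
    single_mem_space (K.down_closed _ huw _ (by simp) (by simp))
  have hj : K.Joinable {u} (Pi.single w 1 : W → ℝ) := by
    refine joinable_single ?_
    rwa [Finset.pair_comm]
  set c : ℕ → W → ℝ := fun i => seg u (Pi.single w 1) (i / N) with hc
  have hmem : ∀ i ≤ N, c i ∈ K.space := fun i hi => seg_mem_space hw hj (div_mem_Icc hi)
  have htc : ∀ i ≤ N, top (c i) = u ∨ top (c i) = w := by
    intro i hi
    by_contra! h
    have h0 : c i (top (c i)) = 0 := by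
      have e1 : (Pi.single u 1 : W → ℝ) (top (c i)) = 0 := Pi.single_eq_of_ne h.1 _
      have e2 : (Pi.single w 1 : W → ℝ) (top (c i)) = 0 := Pi.single_eq_of_ne h.2 _
      change (1 - _) * (Pi.single u 1 : W → ℝ) (top (c i)) +
        _ * (Pi.single w 1 : W → ℝ) (top (c i)) = 0
      rw [e1, e2]
      simp
    have : ∀ v, c i v = 0 := fun v => le_antisymm (h0 ▸ htop (c i) v) ((hmem i hi).1 v)
    have h1 := (hmem i hi).2.1
    simp [this] at h1
  have hsub : ∀ i ≤ N, ∀ j ≤ N, a u (top (c j)) = a u (top (c i)) + a (top (c i)) (top (c j)) := by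
    intro i hi j hj
    refine ha _ _ _ (K.down_closed _ huw _ ?_ (by simp))
    rcases htc i hi with h | h <;> rcases htc j hj with h' | h' <;>
      simp [h, h', Finset.insert_subset_iff]
  have hind : ∀ i ≤ N, a u (top (c i)) = g (c i) - g (c 0) := by
    have c0 : c 0 = Pi.single u 1 := by simp [hc, seg_zero]
    intro i
    induction i with
    | zero =>
      intro _
      rw [c0, top_single htop, sub_self]
      simpa using ha u u u (K.down_closed _ huw _ (by simp) (by simp))
    | succ i ih =>
      intro hi
      have hi' := Nat.le_of_succ_le hi
      rw [hsub i hi' _ hi, ih hi', hg _ (hmem i hi') _ (hmem _ hi)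
        (dist_seg_step_lt hN hw i)]
      abel
  have := hind N le_rfl
  simp only [hc, div_self hN', seg_one, Nat.cast_zero, zero_div, seg_zero] at this
  rwa [top_single htop] at this

end FinSimpComplex

namespace Resolution

variable (p : ℕ) (V : Type)

/-- Alternating `1`-cochains on the full simplex with vertex set `V`. -/
abbrev AltCochain : Type := {α : V → V → ZMod p // ∀ u v, α u v = -α v u ∧ α u u = 0}

/-- The coefficient group: the dual of the alternating cochains (as functions). -/
abbrev Coeff : Type := AltCochain p V → ZMod p

variable {V}

/-- The universal edge cochain: evaluation of an alternating cochain at the edge `uv`. -/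
def edge (u v : V) : Coeff p V := fun α => α.1 u v

lemma neg_edge (u v : V) : -edge p u v = edge p v u := by
  ext α
  exact (α.2 v u).1.symm

variable {p}

/-- The elements of `S` are joined by edge paths in `S`, recording the sum of the edge
cochain. -/
inductive Path (S : Set V) : V → V → Coeff p V → Prop
  | nil (v : V) : Path S v v 0
  | cons {u v w : V} {ζ : Coeff p V} : Path S u v ζ → v ∈ S → w ∈ S → Path S u w (ζ + edge p v w)

namespace Path

variable {S T : Set V} {u v w : V} {ζ ξ : Coeff p V}

lemma single (hu : u ∈ S) (hv : v ∈ S) : Path S u v (edge p u v) := by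
  simpa only [zero_add] using (Path.nil (p := p) u).cons hu hv

lemma trans (h : Path S u v ζ) (h' : Path S v w ξ) : Path S u w (ζ + ξ) := by
  induction h' with
  | nil => simpa using h
  | cons _ hv hw ih => rw [← add_assoc]; exact ih.cons hv hw

lemma symm (h : Path S u v ζ) : Path S v u (-ζ) := by
  induction h with
  | nil => simpa using Path.nil _
  | cons _ hv hw ih =>
    rw [neg_add_rev, neg_edge]
    exact (single hw hv).trans ih

lemma mono (hST : S ⊆ T) (h : Path S u v ζ) : Path T u v ζ := by
  induction h with
  | nil => exact .nil _
  | cons _ hv hw ih => exact ih.cons (hST hv) (hST hw)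

lemma mem_iff (h : Path S u v ζ) : u ∈ S ↔ v ∈ S := by
  induction h with
  | nil => exact Iff.rfl
  | cons _ hv hw ih => exact ih.trans ⟨fun _ => hw, fun _ => hv⟩

end Path

/-- The common vertices of a family of simplices. -/
def core (F : Finset (Finset V)) : Set V := {v | ∀ τ ∈ F, v ∈ τ}

lemma core_anti {F F' : Finset (Finset V)} (h : F ⊆ F') : core F' ⊆ core F :=
  fun _ hv τ hτ => hv τ (h hτ)

variable (p V) in
/-- Representatives of the vertices of the resolution: a flag, a base vertex and a
translation parameter. -/
structure Rep : Type where
  flag : Finset (Finset V)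
  base : V
  shift : Finset V → Coeff p V

instance : Preorder (Rep p V) where
  le x y := x.flag ⊆ y.flag ∧ ∃ ζ, Path (core x.flag) y.base x.base ζ ∧
    ∀ τ ∈ x.flag, 3 ≤ τ.card → x.shift τ = y.shift τ + ζ
  le_refl x := ⟨subset_rfl, 0, .nil _, by simp⟩
  le_trans x y z h h' := by
    obtain ⟨h1, ζ, h2, h3⟩ := h
    obtain ⟨h1', ξ, h2', h3'⟩ := h'
    refine ⟨h1.trans h1', ξ + ζ, (h2'.mono (core_anti h1)).trans h2, fun τ hτ hc => ?_⟩
    rw [h3 τ hτ hc, h3' τ (h1 hτ) hc, add_assoc]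

variable (p V) in
/-- The vertices of the resolution. -/
abbrev Vert : Type := Antisymmetrization (Rep p V) (· ≤ ·)

variable {F F' : Finset (Finset V)} {v v' : V} {b b' : Finset V → Coeff p V} {w w' : Vert p V}
  {σ : Finset V}

/-- The vertex represented by a flag, a base vertex and a translation. -/
def mk (F : Finset (Finset V)) (v : V) (b : Finset V → Coeff p V) : Vert p V :=
  toAntisymmetrization (· ≤ ·) ⟨F, v, b⟩

lemma exists_rep (w : Vert p V) : ∃ F v b, w = mk F v b := by
  induction w using Antisymmetrization.ind with
  | _ x => exact ⟨x.flag, x.base, x.shift, rfl⟩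

lemma mk_le_mk_iff : mk F v b ≤ mk F' v' b' ↔ F ⊆ F' ∧ ∃ ζ, Path (core F) v' v ζ ∧
    ∀ τ ∈ F, 3 ≤ τ.card → b τ = b' τ + ζ := Iff.rfl

lemma mk_mono (v : V) (b : Finset V → Coeff p V) (h : F ⊆ F') : mk F v b ≤ mk F' v b :=
  ⟨h, 0, .nil _, by simp⟩

lemma mk_eq {ζ : Coeff p V} (h : Path (core F) v' v ζ)
    (hb : ∀ τ ∈ F, 3 ≤ τ.card → b τ = b' τ + ζ) : mk F v b = mk F v' b' :=
  le_antisymm (mk_le_mk_iff.2 ⟨subset_rfl, ζ, h, hb⟩)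
    (mk_le_mk_iff.2 ⟨subset_rfl, -ζ, h.symm, fun τ hτ hc => by
      rw [hb τ hτ hc, add_neg_cancel_right]⟩)

lemma mk_eq_iff : mk F v b = mk F' v' b' ↔ F = F' ∧ ∃ ζ, Path (core F) v' v ζ ∧
    ∀ τ ∈ F, 3 ≤ τ.card → b τ = b' τ + ζ := by
  refine ⟨fun h => ?_, ?_⟩
  · obtain ⟨h1, h2⟩ := mk_le_mk_iff.1 h.le
    exact ⟨h1.antisymm (mk_le_mk_iff.1 h.ge).1, h2⟩
  · rintro ⟨rfl, ζ, h, hb⟩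
    exact mk_eq h hb

lemma mk_congr (v : V) (h : ∀ τ ∈ F, 3 ≤ τ.card → b τ = b' τ) : mk F v b = mk F v b' :=
  mk_eq (.nil v) (by simpa using h)

lemma mk_shift (b : Finset V → Coeff p V) (hv : v ∈ core F) (hv' : v' ∈ core F) :
    mk F v b = mk F v' (b + fun _ => edge p v v') :=
  mk_eq (.single hv' hv) fun τ _ _ => by
    rw [Pi.add_apply, add_assoc, ← neg_edge p v v', add_neg_cancel, add_zero]

lemma exists_of_le_mk (h : w ≤ mk F v b) : ∃ F₀ ⊆ F, w = mk F₀ v b := by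
  obtain ⟨F₀, v₀, b₀, rfl⟩ := exists_rep w
  obtain ⟨h1, ζ, h2, h3⟩ := h
  exact ⟨F₀, h1, mk_eq h2 h3⟩

lemma exists_common (h : w ≤ w') : ∃ F F' v b, F ⊆ F' ∧ w = mk F v b ∧ w' = mk F' v b := by
  obtain ⟨F', v, b, rfl⟩ := exists_rep w'
  obtain ⟨F, hF, rfl⟩ := exists_of_le_mk h
  exact ⟨F, F', v, b, hF, rfl, rfl⟩

/-- A representative of a vertex. -/
def rep (w : Vert p V) : Rep p V := ofAntisymmetrization (· ≤ ·) w

lemma mk_rep (w : Vert p V) : mk (rep w).flag (rep w).base (rep w).shift = w :=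
  toAntisymmetrization_ofAntisymmetrization _ w

/-- The flag of a vertex. -/
def flag (w : Vert p V) : Finset (Finset V) := (rep w).flag

lemma flag_mk : flag (mk F v b) = F := (mk_eq_iff.1 (mk_rep (mk F v b))).1

lemma flag_mono (h : w ≤ w') : flag w ⊆ flag w' := by
  obtain ⟨F, F', v, b, hF, rfl, rfl⟩ := exists_common h
  simpa only [flag_mk] using hF

lemma eq_of_le_of_flag_eq (h : w ≤ w') (hf : flag w = flag w') : w = w' := by
  obtain ⟨F, F', v, b, hF, rfl, rfl⟩ := exists_common h
  simp only [flag_mk] at hf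
  rw [hf]

/-- `F` is a flag all of whose members contain `v` and are contained in `σ`. -/
structure IsGood (σ : Finset V) (F : Finset (Finset V)) (v : V) : Prop where
  nonempty : F.Nonempty
  chain : IsChain (· ⊆ ·) (F : Set (Finset V))
  mem : ∀ τ ∈ F, v ∈ τ
  subset : ∀ τ ∈ F, τ ⊆ σ

/-- The vertices of the resolution lying over the simplex `σ`. -/
def Over (σ : Finset V) : Set (Vert p V) := {w | IsGood σ (flag w) (rep w).base}

/-- The vertices of the resolution lying over the boundary of `σ`. -/
def OverBdry (σ : Finset V) : Set (Vert p V) := {w | w ∈ Over σ ∧ σ ∉ flag w}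

lemma mk_mem_over : mk F v b ∈ Over σ ↔ IsGood σ F v := by
  obtain ⟨h1, ζ, h2, -⟩ := mk_eq_iff.1 (mk_rep (mk F v b))
  change IsGood σ (rep (mk F v b)).flag (rep (mk F v b)).base ↔ _
  rw [h1] at h2 ⊢
  have := h2.mem_iff
  exact ⟨fun h => ⟨h.1, h.2, this.2 h.3, h.4⟩, fun h => ⟨h.1, h.2, this.1 h.3, h.4⟩⟩

lemma mk_mem_overBdry : mk F v b ∈ OverBdry σ ↔ IsGood σ F v ∧ σ ∉ F := by
  change _ ∧ _ ↔ _
  rw [mk_mem_over, flag_mk]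

lemma IsGood.mono (h : IsGood σ F' v) (hF : F ⊆ F') (hne : F.Nonempty) : IsGood σ F v :=
  ⟨hne, h.2.mono (by exact_mod_cast hF), fun τ hτ => h.3 τ (hF hτ), fun τ hτ => h.4 τ (hF hτ)⟩

variable [DecidableEq V]

lemma IsGood.insert {τ : Finset V} (h : IsGood σ F v) (hv : v ∈ τ) (hτ : τ ⊆ σ)
    (hc : ∀ τ' ∈ F, τ ⊆ τ' ∨ τ' ⊆ τ) : IsGood σ (insert τ F) v := by
  refine ⟨Finset.insert_nonempty _ _, ?_, ?_, ?_⟩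
  · rw [Finset.coe_insert]
    exact h.2.insert fun τ' hτ' _ => hc τ' hτ'
  · simpa using ⟨hv, h.3⟩
  · simpa using ⟨hτ, h.4⟩

omit [DecidableEq V] in
lemma isGood_singleton {τ : Finset V} (hv : v ∈ τ) (hτ : τ ⊆ σ) : IsGood σ {τ} v :=
  ⟨by simp, by simp, by simpa, by simpa⟩

lemma isGood_pair {τ τ' : Finset V} (hv : v ∈ τ) (h : τ ⊆ τ') (hτ : τ' ⊆ σ) :
    IsGood σ {τ, τ'} v :=
  (isGood_singleton (h hv) hτ).insert hv (h.trans hτ) (by simp [h])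

/-- Additive `1`-cocycles on a subset of a poset. -/
def IsCocycleOn {P A : Type*} [PartialOrder P] [AddCommGroup A] (S : Set P) (a : P → P → A) :
    Prop :=
  ∀ u ∈ S, ∀ v ∈ S, ∀ w ∈ S, u ≤ v → v ≤ w → a u w = a u v + a v w

section

variable {P A : Type*} [PartialOrder P] [AddCommGroup A] {S : Set P} {a : P → P → A}

lemma IsCocycleOn.self (ha : IsCocycleOn S a) {u : P} (hu : u ∈ S) : a u u = 0 := by
  have := ha u hu u hu u hu le_rfl le_rfl
  simpa using this

end

section

variable {A : Type*} [AddCommGroup A] {a : Vert p V → Vert p V → A}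

/-- Adding `σ` to the flag of a vertex. -/
def up (σ : Finset V) (w : Vert p V) : Vert p V :=
  mk (insert σ (flag w)) (rep w).base (rep w).shift

/-- Removing `σ` from the flag of a vertex. -/
def down (σ : Finset V) (w : Vert p V) : Vert p V :=
  mk ((flag w).erase σ) (rep w).base (rep w).shift

lemma down_mk : down σ (mk F v b) = mk (F.erase σ) v b := by
  obtain ⟨h1, ζ, h2, h3⟩ := mk_eq_iff.1 (mk_rep (mk F v b))
  rw [down, flag_mk]
  rw [h1] at h2 h3
  exact mk_eq (h2.mono (core_anti (Finset.erase_subset _ _)))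
    fun τ hτ => h3 τ (Finset.mem_of_mem_erase hτ)

lemma up_mk (hF : IsGood σ F v) (hσ : σ.card < 3) : up σ (mk F v b) = mk (insert σ F) v b := by
  obtain ⟨h1, ζ, h2, h3⟩ := mk_eq_iff.1 (mk_rep (mk F v b))
  rw [up, flag_mk]
  rw [h1] at h2 h3
  refine mk_eq (h2.mono fun u hu τ hτ => ?_) fun τ hτ hc => ?_
  · rcases Finset.mem_insert.1 hτ with rfl | hτ
    · obtain ⟨ρ, hρ⟩ := hF.1
      exact hF.4 ρ hρ (hu ρ hρ)
    · exact hu τ hτ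
  · rcases Finset.mem_insert.1 hτ with rfl | hτ
    · omega
    · exact h3 τ hτ hc

lemma coboundary_of_card_lt (hσ : σ.card < 3) (hne : σ.Nonempty) (ha : IsCocycleOn (Over σ) a) :
    ∃ H : Vert p V → A, ∀ u ∈ Over σ, ∀ w ∈ Over σ, u ≤ w → a u w = H w - H u := by
  obtain ⟨v₀, hv₀⟩ := hne
  set c : Vert p V := mk {σ} v₀ 0 with hc
  have hcO : c ∈ Over σ := mk_mem_over.2 (isGood_singleton hv₀ subset_rfl)
  refine ⟨fun w => a c (up σ w) - a w (up σ w), fun u hu w hw huw => ?_⟩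
  obtain ⟨F, F', v, b, hF, rfl, rfl⟩ := exists_common huw
  have hg := mk_mem_over.1 hu
  have hg' := mk_mem_over.1 hw
  have hv : v ∈ σ := by
    obtain ⟨ρ, hρ⟩ := hg.1
    exact hg.4 ρ hρ (hg.3 ρ hρ)
  have hgi := hg.insert hv subset_rfl fun τ hτ => .inr (hg.4 τ hτ)
  have hgi' := hg'.insert hv subset_rfl fun τ hτ => .inr (hg'.4 τ hτ)
  simp only [up_mk hg hσ, up_mk hg' hσ]
  have hcv : c = mk {σ} v b :=
    mk_eq (.single (by simpa [core] using hv) (by simpa [core] using hv₀))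
      (fun τ hτ h3 => by rw [Finset.mem_singleton] at hτ; subst hτ; omega)
  have hcu : c ≤ mk (insert σ F) v b := hcv ▸ mk_mono v b (by simp)
  have hu' := mk_mem_over (b := b).2 hgi
  have hw' := mk_mem_over (b := b).2 hgi'
  have huw' : mk (insert σ F) v b ≤ mk (insert σ F') v b :=
    mk_mono v b (Finset.insert_subset_insert _ hF)
  have hiu : mk F v b ≤ mk (insert σ F) v b := mk_mono v b (Finset.subset_insert _ _)
  have hiw : mk F' v b ≤ mk (insert σ F') v b := mk_mono v b (Finset.subset_insert _ _)
  have e1 := ha _ hcO _ hu' _ hw' hcu huw'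
  have e2 := ha _ hu _ hu' _ hw' hiu huw'
  have e3 := ha _ hu _ hw _ hw' huw hiw
  rw [e2] at e3
  rw [e1, eq_comm, ← sub_eq_zero]
  rw [← sub_eq_zero] at e3
  rw [← e3]
  abel

lemma down_mem (hw : w ∈ Over σ) (h : flag w ≠ {σ}) : down σ w ∈ OverBdry σ := by
  obtain ⟨F, v, b, rfl⟩ := exists_rep w
  rw [mk_mem_over] at hw
  rw [flag_mk] at h
  rw [down_mk, mk_mem_overBdry]
  refine ⟨hw.mono (Finset.erase_subset _ _) ?_, by simp⟩
  rw [Finset.nonempty_iff_ne_empty, Ne, Finset.erase_eq_empty_iff]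
  rintro (h' | h')
  · exact hw.1.ne_empty h'
  · exact h h'

lemma down_le : down σ w ≤ w := by
  obtain ⟨F, v, b, rfl⟩ := exists_rep w
  rw [down_mk]
  exact mk_mono v b (Finset.erase_subset _ _)

lemma down_mono (h : w ≤ w') : down σ w ≤ down σ w' := by
  obtain ⟨F, F', v, b, hF, rfl, rfl⟩ := exists_common h
  rw [down_mk, down_mk]
  exact mk_mono v b (Finset.erase_subset_erase _ hF)

lemma down_of_not_mem (h : σ ∉ flag w) : down σ w = w := by
  obtain ⟨F, v, b, rfl⟩ := exists_rep w
  rw [flag_mk] at h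
  rw [down_mk, Finset.erase_eq_of_notMem h]

omit [DecidableEq V] in
lemma flag_ne_singleton (hw : w ∈ Over σ) (hle : w ≤ w') (h : flag w ≠ {σ}) : flag w' ≠ {σ} := by
  intro h'
  have := flag_mono hle
  rw [h', Finset.subset_singleton_iff] at this
  exact this.elim hw.1.ne_empty h

end

end Resolution
namespace Resolution

variable {p : ℕ} {V : Type} [DecidableEq V] {F F' : Finset (Finset V)} {u v v' : V}
  {b b' : Finset V → Coeff p V} {w w' : Vert p V} {σ : Finset V}

section Injectivity

variable {A : Type*} [AddCommGroup A] {a : Vert p V → Vert p V → A} {h : Vert p V → A}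

/-- The potential on the vertices with `σ` in their flag which extends the potential `h`. -/
def cylPot (σ : Finset V) (a : Vert p V → Vert p V → A) (h : Vert p V → A) (w : Vert p V) : A :=
  h (down σ w) + a (down σ w) w

variable (ha : IsCocycleOn (Over σ) a)
  (hh : ∀ u ∈ OverBdry σ, ∀ w ∈ OverBdry σ, u ≤ w → a u w = h w - h u)

include ha hh

lemma eq_cylPot_sub (hw : w ∈ Over σ) (hw' : w' ∈ Over σ) (hle : w ≤ w') (hσ : flag w ≠ {σ}) :
    a w w' = cylPot σ a h w' - cylPot σ a h w := by
  have hd := down_mem hw hσ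
  have hd' := down_mem hw' (flag_ne_singleton hw hle hσ)
  have e1 := ha _ hd.1 _ hd'.1 _ hw' (down_mono hle) down_le
  have e2 := ha _ hd.1 _ hw _ hw' down_le hle
  rw [hh _ hd _ hd' (down_mono hle), e2] at e1
  rw [cylPot, cylPot, eq_sub_iff_add_eq, add_comm (h (down σ w)), ← add_assoc, add_comm (a w w'),
    e1]
  abel

/-- The value at `mk {σ} v b` of the potential. -/
def apexPot (σ : Finset V) (a : Vert p V → Vert p V → A) (h : Vert p V → A) (v : V)
    (b : Finset V → Coeff p V) : A :=
  cylPot σ a h (mk {{v}, σ} v b) - a (mk {σ} v b) (mk {{v}, σ} v b)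

omit [DecidableEq V] ha hh in
lemma mem_of_isGood (hF : IsGood σ F v) : v ∈ σ := by
  obtain ⟨ρ, hρ⟩ := hF.1
  exact hF.4 ρ hρ (hF.3 ρ hρ)

lemma cylPot_sub_apex (hF : IsGood σ F v) (hσ : σ ∈ F) (hF1 : F ≠ {σ}) (hc : 3 ≤ σ.card) :
    cylPot σ a h (mk F v b) - a (mk {σ} v b) (mk F v b) = apexPot σ a h v b := by
  have hv : v ∈ σ := mem_of_isGood hF
  have hvσ : ({v} : Finset V) ≠ σ := by rintro rfl; simp at hc
  have key : ∀ F₁ F₂ : Finset (Finset V), IsGood σ F₁ v → IsGood σ F₂ v → F₁ ⊆ F₂ → σ ∈ F₁ →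
      F₁ ≠ {σ} → cylPot σ a h (mk F₁ v b) - a (mk {σ} v b) (mk F₁ v b) =
        cylPot σ a h (mk F₂ v b) - a (mk {σ} v b) (mk F₂ v b) := by
    intro F₁ F₂ h1 h2 h12 hσ1 hne
    have o1 := mk_mem_over (b := b).2 h1
    have o2 := mk_mem_over (b := b).2 h2
    have o0 := mk_mem_over (b := b).2 (isGood_singleton hv (subset_refl σ))
    have e1 := eq_cylPot_sub ha hh o1 o2 (mk_mono v b h12) (by rwa [flag_mk])
    have e2 := ha _ o0 _ o1 _ o2 (mk_mono v b (by simpa using hσ1)) (mk_mono v b h12)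
    rw [e2, e1]
    abel
  have hg : IsGood σ (insert {v} F) v := hF.insert (by simp) (by simpa)
    fun τ hτ => .inl (by simpa using hF.3 τ hτ)
  have hg' : IsGood σ {{v}, σ} v := isGood_pair (by simp) (by simpa) subset_rfl
  rw [key F _ hF hg (Finset.subset_insert _ _) hσ hF1, apexPot]
  refine (key _ _ hg' hg (Finset.insert_subset_insert _ (by simpa)) (by simp) fun e => hvσ ?_).symm
  have : ({v} : Finset V) ∈ ({σ} : Finset (Finset V)) := e ▸ by simp
  simpa using this

lemma apexPot_path (hc : 3 ≤ σ.card) {ζ : Coeff p V} (hζ : Path (core {σ}) v' v ζ) :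
    ∀ b, apexPot σ a h v' b = apexPot σ a h v (b + fun _ => ζ) := by
  induction hζ with
  | nil => exact fun b => by rw [show (b + fun _ => (0 : Coeff p V)) = b from add_zero b]
  | @cons v w ζ _ hv hw ih =>
    intro b
    have hvσ : v ∈ σ := by simpa [core] using hv
    have hwσ : w ∈ σ := by simpa [core] using hw
    rw [ih b, ← Pi.add_def, ← add_assoc]
    change apexPot σ a h v (b + fun _ => ζ) = apexPot σ a h w ((b + fun _ => ζ) + fun _ => _)
    generalize (b + fun _ => ζ) = b
    have hsub : ({v, w} : Finset V) ⊆ σ := by simp [Finset.insert_subset_iff, hvσ, hwσ]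
    have hne : ({v, w} : Finset V) ≠ σ := by
      rintro rfl
      exact absurd (hc.trans Finset.card_le_two) (by omega)
    have hne' : ({{v, w}, σ} : Finset (Finset V)) ≠ {σ} := fun e => hne <| by
      have : ({v, w} : Finset V) ∈ ({σ} : Finset (Finset V)) := e ▸ by simp
      simpa using this
    rw [← cylPot_sub_apex ha hh (F := {{v, w}, σ}) (isGood_pair (by simp) hsub subset_rfl)
        (by simp) hne' hc,
      ← cylPot_sub_apex ha hh (F := {{v, w}, σ}) (isGood_pair (by simp) hsub subset_rfl)
        (by simp) hne' hc,
      mk_shift b hv hw, mk_shift (F := {{v, w}, σ}) (v := v) (v' := w) b]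
    · simp [core, hvσ]
    · simp [core, hwσ]

omit ha hh in
lemma apexPot_congr (hb : b σ = b' σ) : apexPot σ a h v b = apexPot σ a h v b' := by
  rw [apexPot, apexPot, mk_congr (F := {σ}) v (b' := b'), mk_congr (F := {{v}, σ}) v (b' := b')]
  · intro τ hτ h3
    rcases Finset.mem_insert.1 hτ with rfl | hτ
    · simp at h3
    · rw [Finset.mem_singleton.1 hτ, hb]
  · intro τ hτ h3
    rw [Finset.mem_singleton.1 hτ, hb]

/-- A cocycle over `σ` which is a coboundary over `∂σ` is a coboundary. -/
lemma coboundary_of_overBdry (hc : 3 ≤ σ.card) :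
    ∃ H : Vert p V → A, ∀ u ∈ Over σ, ∀ w ∈ Over σ, u ≤ w → a u w = H w - H u := by
  classical
  refine ⟨fun w => if flag w = {σ} then apexPot σ a h (rep w).base (rep w).shift
    else cylPot σ a h w, fun u hu w hw huw => ?_⟩
  by_cases hfu : flag u = {σ}
  · by_cases hfw : flag w = {σ}
    · have : u = w := eq_of_le_of_flag_eq huw (hfu.trans hfw.symm)
      subst this
      rw [ha.self hu, sub_self]
    · simp only [hfu, hfw, if_true, if_false]
      obtain ⟨F, F', v, b, hF, rfl, rfl⟩ := exists_common huw
      rw [flag_mk] at hfu hfw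
      subst hfu
      have hg := mk_mem_over.1 hw
      obtain ⟨h1, ζ, h2, h3⟩ := mk_eq_iff.1 (mk_rep (mk {σ} v b))
      rw [h1] at h2 h3
      rw [apexPot_congr (b := (rep (mk {σ} v b)).shift) (b' := b + fun _ => ζ)
          (h3 σ (by simp) hc), ← apexPot_path ha hh hc h2,
        ← cylPot_sub_apex ha hh hg (by simpa using hF) hfw hc]
      abel
  · simp only [hfu, flag_ne_singleton hu huw hfu, if_false]
    exact eq_cylPot_sub ha hh hu hw huw hfu

end Injectivity

section Surjectivity

variable {a : Vert p V → Vert p V → ZMod p}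

/-- The potential of `mk F v b`, normalised at the vertex `mk {{v}} v b`. -/
def starPot (a : Vert p V → Vert p V → ZMod p) (F : Finset (Finset V)) (v : V)
    (b : Finset V → Coeff p V) : ZMod p :=
  a (mk {{v}} v b) (mk (insert {v} F) v b) - a (mk F v b) (mk (insert {v} F) v b)

lemma starPot_congr (hb : ∀ τ ∈ F, 3 ≤ τ.card → b τ = b' τ) :
    starPot a F v b = starPot a F v b' := by
  rw [starPot, starPot, mk_congr (F := F) v hb, mk_congr (F := {{v}}) v (b' := b'),
    mk_congr (F := insert {v} F) v (b' := b')]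
  · intro τ hτ h3
    rcases Finset.mem_insert.1 hτ with rfl | hτ
    · simp at h3
    · exact hb τ hτ h3
  · intro τ hτ h3
    rw [Finset.mem_singleton.1 hτ] at h3
    simp at h3

/-- The discrepancy of the normalisations at the endpoints of an edge of `σ`. -/
def edgeCochain (σ : Finset V) (a : Vert p V → Vert p V → ZMod p) : AltCochain p V :=
  ⟨fun u v => if u ∈ σ ∧ v ∈ σ then starPot a {{u, v}} u 0 - starPot a {{u, v}} v 0 else 0, by
    intro u v
    refine ⟨?_, by simp⟩
    simp only [and_comm (a := u ∈ σ), Finset.pair_comm u v]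
    split_ifs <;> simp⟩

variable (ha : IsCocycleOn (OverBdry σ) a)

include ha

lemma starPot_sub (hF' : IsGood σ F' v) (hFF : F ⊆ F') (hne : F.Nonempty) (hσ : σ ∉ F')
    (hc : 3 ≤ σ.card) :
    starPot a F' v b - starPot a F v b = a (mk F v b) (mk F' v b) := by
  have hv : v ∈ σ := mem_of_isGood hF'
  have hvσ : σ ≠ {v} := by rintro rfl; simp at hc
  have hins : ∀ {F}, IsGood σ F v → IsGood σ (insert {v} F) v := fun hF =>
    hF.insert (by simp) (by simpa) fun τ hτ => .inl (by simpa using hF.3 τ hτ)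
  have hF := hF'.mono hFF hne
  have o0 : mk {{v}} v b ∈ OverBdry σ :=
    mk_mem_overBdry.2 ⟨isGood_singleton (by simp) (by simpa), by simpa using hvσ⟩
  have o1 : mk F v b ∈ OverBdry σ := mk_mem_overBdry.2 ⟨hF, fun h => hσ (hFF h)⟩
  have o2 : mk F' v b ∈ OverBdry σ := mk_mem_overBdry.2 ⟨hF', hσ⟩
  have o3 : mk (insert {v} F) v b ∈ OverBdry σ :=
    mk_mem_overBdry.2 ⟨hins hF, by simpa [hvσ] using fun h => hσ (hFF h)⟩
  have o4 : mk (insert {v} F') v b ∈ OverBdry σ :=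
    mk_mem_overBdry.2 ⟨hins hF', by simpa [hvσ] using hσ⟩
  have l1 := mk_mono v b (Finset.insert_subset_insert {v} hFF)
  have e1 := ha _ o0 _ o3 _ o4 (mk_mono v b (by simp)) l1
  have e2 := ha _ o1 _ o3 _ o4 (mk_mono v b (Finset.subset_insert _ _)) l1
  have e3 := ha _ o1 _ o2 _ o4 (mk_mono v b hFF) (mk_mono v b (Finset.subset_insert _ _))
  rw [starPot, starPot, e1]
  rw [e2] at e3
  linear_combination e3

lemma starPot_step (hF : IsGood σ F v) (hv : v ∈ core F) (hu : u ∈ core F) (hσ : σ ∉ F)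
    (hc : 3 ≤ σ.card) :
    starPot a F v b = edge p v u (edgeCochain σ a) + starPot a F u (b + fun _ => edge p v u) := by
  have hFu : IsGood σ F u := ⟨hF.1, hF.2, hu, hF.4⟩
  have hvσ := mem_of_isGood hF
  have huσ := mem_of_isGood hFu
  have hne : σ ≠ {v, u} := by
    rintro rfl
    exact absurd (hc.trans Finset.card_le_two) (by omega)
  have hsub : ({v, u} : Finset V) ⊆ σ := by simp [Finset.insert_subset_iff, hvσ, huσ]
  have hcomp : ∀ τ ∈ F, ({v, u} : Finset V) ⊆ τ ∨ τ ⊆ {v, u} := fun τ hτ => .inl (by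
    simp [Finset.insert_subset_iff, hv τ hτ, hu τ hτ])
  set F₁ := insert {v, u} F with hF₁
  have hσ1 : σ ∉ F₁ := by simp [hF₁, hne, hσ]
  have hg : IsGood σ F₁ v := hF.insert (by simp) hsub hcomp
  have hgu : IsGood σ F₁ u := hFu.insert (by simp) hsub hcomp
  have s1 := starPot_sub ha (b := b) hg (Finset.subset_insert _ _) hF.1 hσ1 hc
  have s2 := starPot_sub ha (b := b + fun _ => edge p v u) hgu (Finset.subset_insert _ _) hF.1
    hσ1 hc
  have s3 := starPot_sub ha (b := b) (F := {{v, u}}) hg (by simp [hF₁]) (by simp) hσ1 hc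
  have s4 := starPot_sub ha (b := b + fun _ => edge p v u) (F := {{v, u}}) hgu (by simp [hF₁])
    (by simp) hσ1 hc
  have m1 : mk F v b = mk F u (b + fun _ => edge p v u) := mk_shift b hv hu
  have m2 : mk F₁ v b = mk F₁ u (b + fun _ => edge p v u) := mk_shift b hg.3 hgu.3
  have m3 : mk {{v, u}} v b = mk {{v, u}} u (b + fun _ => edge p v u) :=
    mk_shift b (by simp [core]) (by simp [core])
  have hsmall : ∀ b b' : Finset V → Coeff p V,
      ∀ τ ∈ ({{v, u}} : Finset (Finset V)), 3 ≤ τ.card → b τ = b' τ := fun b b' τ hτ h3 => by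
    rw [Finset.mem_singleton.1 hτ] at h3
    exact absurd (h3.trans Finset.card_le_two) (by omega)
  rw [starPot_congr (hsmall b 0)] at s3
  rw [starPot_congr (hsmall (b + fun _ => edge p v u) 0)] at s4
  rw [m1, m2, ← s2] at s1
  rw [m2, m3, ← s4] at s3
  have he : edge p v u (edgeCochain σ a) = starPot a {{v, u}} v 0 - starPot a {{v, u}} u 0 :=
    if_pos ⟨hvσ, huσ⟩
  rw [he]
  linear_combination s3 - s1

lemma starPot_path (hF : IsGood σ F v) (hσ : σ ∉ F) (hc : 3 ≤ σ.card) {ζ : Coeff p V}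
    (hζ : Path (core F) v' v ζ) :
    ∀ b, starPot a F v' b = ζ (edgeCochain σ a) + starPot a F v (b + fun _ => ζ) := by
  induction hζ with
  | nil =>
    intro b
    rw [show (b + fun _ => (0 : Coeff p V)) = b from add_zero b, Pi.zero_apply, zero_add]
  | @cons v w ζ _ hv hw ih =>
    intro b
    have hFv : IsGood σ F v := ⟨hF.1, hF.2, hv, hF.4⟩
    rw [ih hFv b, starPot_step ha hFv hv hw hσ hc, Pi.add_apply, ← add_assoc,
      show (b + fun _ => ζ + edge p v w) = (b + fun _ => ζ) + fun _ => edge p v w from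
        (add_assoc b (fun _ => ζ) _).symm]

omit ha in
/-- The potential of the extended cocycle on the vertices whose flag strictly contains `σ`. -/
def extPot (σ : Finset V) (a : Vert p V → Vert p V → ZMod p) (w : Vert p V) : ZMod p :=
  (rep w).shift σ (edgeCochain σ a) + starPot a ((flag w).erase σ) (rep w).base (rep w).shift

lemma extPot_mk (hF : IsGood σ F v) (hσ : σ ∈ F) (hF1 : F ≠ {σ}) (hc : 3 ≤ σ.card) :
    extPot σ a (mk F v b) = b σ (edgeCochain σ a) + starPot a (F.erase σ) v b := by
  obtain ⟨h1, ζ, h2, h3⟩ := mk_eq_iff.1 (mk_rep (mk F v b))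
  rw [h1] at h2 h3
  have hne : (F.erase σ).Nonempty := by
    rw [Finset.nonempty_iff_ne_empty, Ne, Finset.erase_eq_empty_iff]
    exact fun h => h.elim hF.1.ne_empty hF1
  have hg : IsGood σ (F.erase σ) (rep (mk F v b)).base :=
    IsGood.mono ⟨hF.1, hF.2, h2.mem_iff.1 hF.3, hF.4⟩ (Finset.erase_subset _ _) hne
  rw [extPot, flag_mk, h3 σ hσ hc, starPot_path ha hg (by simp) hc
      (h2.mono (core_anti (Finset.erase_subset _ _))) b, Pi.add_apply, add_assoc]
  congr 2
  exact starPot_congr fun τ hτ h => h3 τ (Finset.mem_of_mem_erase hτ) h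

lemma extPot_sub (hw' : w' ∈ Over σ) (hle : w ≤ w') (hσ : σ ∈ flag w) (hfw : flag w ≠ {σ})
    (hc : 3 ≤ σ.card) : extPot σ a w' = extPot σ a w + a (down σ w) (down σ w') := by
  obtain ⟨F, F', v, b, hF, rfl, rfl⟩ := exists_common hle
  rw [flag_mk] at hσ hfw
  have hg' := mk_mem_over.1 hw'
  have hg := hg'.mono hF ⟨σ, hσ⟩
  have hne : (F.erase σ).Nonempty := by
    rw [Finset.nonempty_iff_ne_empty, Ne, Finset.erase_eq_empty_iff]
    exact fun h => h.elim hg.1.ne_empty hfw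
  have hF1 : F' ≠ {σ} := by
    rintro rfl
    exact (Finset.subset_singleton_iff.1 hF).elim hg.1.ne_empty hfw
  have := starPot_sub ha (b := b) (hg'.mono (Finset.erase_subset σ _)
    (hne.mono (Finset.erase_subset_erase _ hF))) (Finset.erase_subset_erase σ hF) hne (by simp) hc
  rw [extPot_mk ha hg hσ hfw hc, extPot_mk ha hg' (hF hσ) hF1 hc, down_mk, down_mk, ← this]
  ring

/-- A cocycle over `∂σ` extends over `σ`. -/
lemma exists_extension (hc : 3 ≤ σ.card) :
    ∃ a', IsCocycleOn (Over σ) a' ∧ ∀ u ∈ OverBdry σ, ∀ w ∈ OverBdry σ, a' u w = a u w := by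
  classical
  refine ⟨fun u w => if flag u = {σ} then (if flag w = {σ} then 0 else extPot σ a w)
    else a (down σ u) (down σ w), fun u hu v hv w hw huv hvw => ?_, fun u hu w hw => ?_⟩
  · by_cases hfu : flag u = {σ}
    · by_cases hfv : flag v = {σ}
      · simp [hfu, hfv]
      · have hfw := flag_ne_singleton hv hvw hfv
        have hσ : σ ∈ flag v := flag_mono huv (by simp [hfu])
        simp only [hfu, hfv, hfw, if_true, if_false]
        exact extPot_sub ha hw hvw hσ hfv hc
    · have hfv := flag_ne_singleton hu huv hfu
      simp only [hfu, hfv, if_false]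
      exact ha _ (down_mem hu hfu) _ (down_mem hv hfv) _
        (down_mem hw (flag_ne_singleton hv hvw hfv)) (down_mono huv) (down_mono hvw)
  · have hfu : flag u ≠ {σ} := fun e => hu.2 (by simp [e])
    simp only [hfu, if_false, down_of_not_mem hu.2, down_of_not_mem hw.2]

omit [DecidableEq V] ha in
lemma exists_extension_of_card_lt (hc : σ.card < 3) (ha : IsCocycleOn (OverBdry σ) a) :
    ∃ a', IsCocycleOn (Over σ) a' ∧
      ∀ u ∈ OverBdry σ, ∀ w ∈ OverBdry σ, u ≤ w → a' u w = a u w := by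
  refine ⟨fun _ _ => 0, fun _ _ _ _ _ _ _ _ => by simp, fun u hu w hw huw => ?_⟩
  have hsing : ∀ {F v}, IsGood σ F v → σ ∉ F → F = {{v}} := by
    intro F v hF hσ
    refine Finset.eq_singleton_iff_nonempty_unique_mem.2 ⟨hF.1, fun τ hτ => ?_⟩
    have hlt : τ ⊂ σ := Finset.ssubset_iff_subset_ne.2 ⟨hF.4 τ hτ, fun e => hσ (e ▸ hτ)⟩
    have := Finset.card_lt_card hlt
    exact Finset.eq_singleton_iff_unique_mem.2 ⟨hF.3 τ hτ, fun x hx =>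
      Finset.card_le_one.1 (by omega) x hx v (hF.3 τ hτ)⟩
  obtain ⟨F, F', v, b, hF, rfl, rfl⟩ := exists_common huw
  rw [mk_mem_overBdry] at hu hw
  obtain rfl : F = F' := (hsing hu.1 hu.2).trans (hsing hw.1 hw.2).symm
  exact (ha.self (mk_mem_overBdry.2 hu)).symm

end Surjectivity

lemma overBdry_coboundary_extends {A : Type*} [AddCommGroup A] {a : Vert p V → Vert p V → A}
    {h : Vert p V → A} (hne : σ.Nonempty) (ha : IsCocycleOn (Over σ) a)
    (hh : ∀ u ∈ OverBdry σ, ∀ w ∈ OverBdry σ, u ≤ w → a u w = h w - h u) :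
    ∃ H : Vert p V → A, ∀ u ∈ Over σ, ∀ w ∈ Over σ, u ≤ w → a u w = H w - H u := by
  by_cases hc : 3 ≤ σ.card
  · exact coboundary_of_overBdry ha hh hc
  · exact coboundary_of_card_lt (not_le.1 hc) hne ha

lemma overBdry_cocycle_extends {a : Vert p V → Vert p V → ZMod p}
    (ha : IsCocycleOn (OverBdry σ) a) :
    ∃ a', IsCocycleOn (Over σ) a' ∧
      ∀ u ∈ OverBdry σ, ∀ w ∈ OverBdry σ, u ≤ w → a' u w = a u w := by
  by_cases hc : 3 ≤ σ.card
  · obtain ⟨a', h1, h2⟩ := exists_extension ha hc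
    exact ⟨a', h1, fun u hu w hw _ => h2 u hu w hw⟩
  · exact exists_extension_of_card_lt (not_le.1 hc) ha

end Resolution
lemma IsCompact.exists_uniform {E : Type*} [PseudoMetricSpace E] {s : Set E} (hs : IsCompact s)
    {P : E → E → E → Prop}
    (h : ∀ x₀ ∈ s, ∃ u ∈ nhds x₀, ∀ x ∈ u, ∀ y ∈ u, ∀ z ∈ u, x ∈ s → y ∈ s → z ∈ s → P x y z) :
    ∃ δ > 0, ∀ x ∈ s, ∀ y ∈ s, ∀ z ∈ s, dist x y < δ → dist x z < δ → P x y z := by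
  choose u hu hP using fun x : s => h x x.2
  obtain ⟨δ, hδ, hball⟩ := lebesgue_number_lemma_of_metric (c := fun x : s => interior (u x)) hs
    (fun _ => isOpen_interior)
    fun x hx => mem_iUnion.2 ⟨⟨x, hx⟩, mem_interior_iff_mem_nhds.2 (hu ⟨x, hx⟩)⟩
  refine ⟨δ, hδ, fun x hx y hy z hz hxy hxz => ?_⟩
  obtain ⟨i, hi⟩ := hball x hx
  have hi := hi.trans interior_subset
  exact hP i x (hi (Metric.mem_ball_self hδ)) y (hi (by rwa [Metric.mem_ball, dist_comm])) z
    (hi (by rwa [Metric.mem_ball, dist_comm])) hx hy hz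

namespace FinSimpComplex

open AS

variable {W : Type*} [Fintype W] [DecidableEq W] {L : FinSimpComplex W}
  {A : Type*} [AddCommGroup A] {X : Type*} [TopologicalSpace X] {ι : X → W → ℝ}
  {top : (W → ℝ) → W}

section

variable (hι : Topology.IsEmbedding ι) (hr : range ι = L.space)
  (htop : ∀ (y : W → ℝ) (v : W), y v ≤ y (top y))

include hι hr htop

lemma IsSimplicialCocycle.isLocCocycle {a : W → W → A} (ha : L.IsSimplicialCocycle a) :
    IsLocCocycle fun x y : X => a (top (ι x)) (top (ι y)) := by
  intro x₀
  obtain ⟨u, hu, h⟩ := ha.locally htop (x₀ := ι x₀) (hr ▸ mem_range_self x₀)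
  exact ⟨ι ⁻¹' u, hι.continuous.continuousAt.preimage_mem_nhds hu,
    fun x hx y hy z hz => h _ hx _ hy _ hz⟩

lemma isLocPotential_of_eq_sub {a : W → W → A} {h : W → A}
    (ha : ∀ u w, {u, w} ∈ L.faces → a u w = h w - h u) :
    IsLocPotential (fun x y : X => a (top (ι x)) (top (ι y))) fun x => h (top (ι x)) := by
  intro x₀
  have hx₀ : ι x₀ ∈ L.space := hr ▸ mem_range_self x₀
  obtain ⟨u, hu, h'⟩ := eventually_support_and_max hx₀
  refine ⟨ι ⁻¹' u, hι.continuous.continuousAt.preimage_mem_nhds hu, fun x hx y hy => ha _ _ ?_⟩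
  obtain ⟨t, ht, hs⟩ := hx₀.2.2
  refine L.down_closed t ht _ ?_ (by simp)
  simp only [Finset.insert_subset_iff, Finset.singleton_subset_iff]
  exact ⟨hs _ ((h' _ hx).2 _ (htop _)), hs _ ((h' _ hy).2 _ (htop _))⟩

lemma exists_simplicialCocycle {φ : X → X → A} (hφ : IsLocCocycle φ) :
    ∃ a : W → W → A, L.IsSimplicialCocycle a ∧ ∃ g,
      IsLocPotential (fun x y : X => φ x y - a (top (ι x)) (top (ι y))) g := by
  rcases isEmpty_or_nonempty X with hX | hX
  · exact ⟨fun _ _ => 0, fun _ _ _ _ => by simp, fun _ => 0, fun x => hX.elim x⟩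
  have hinv : ∀ x, invFun ι (ι x) = x := leftInverse_invFun hι.injective
  obtain ⟨δ, hδ, hP⟩ := (isCompact_space L).exists_uniform
    (P := fun x y z => φ (invFun ι x) (invFun ι z) =
      φ (invFun ι x) (invFun ι y) + φ (invFun ι y) (invFun ι z)) (by
    rw [← hr]
    rintro _ ⟨x₀, rfl⟩
    obtain ⟨u, hu, h⟩ := hφ x₀
    obtain ⟨u', hu', h'⟩ := Filter.mem_comap.1 (hι.isInducing.nhds_eq_comap x₀ ▸ hu)
    refine ⟨u', hu', fun x hx y hy z hz => ?_⟩
    rintro ⟨x, rfl⟩ ⟨y, rfl⟩ ⟨z, rfl⟩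
    simp only [hinv]
    exact h _ (h' hx) _ (h' hy) _ (h' hz))
  obtain ⟨a, ha, g, hg⟩ := IsUniformCocycle.exists_simplicial htop hδ hP
  refine ⟨a, ha, fun x => g (ι x), fun x₀ => ?_⟩
  obtain ⟨u, hu, h⟩ := hg (ι x₀) (hr ▸ mem_range_self x₀)
  refine ⟨ι ⁻¹' u, hι.continuous.continuousAt.preimage_mem_nhds hu, fun x hx y hy => ?_⟩
  have := h _ hx _ hy (hr ▸ mem_range_self x) (hr ▸ mem_range_self y)
  simpa only [hinv] using this

lemma IsSimplicialCocycle.eq_sub_of_isLocPotential {a : W → W → A}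
    (ha : L.IsSimplicialCocycle a) {g : X → A}
    (hg : IsLocPotential (fun x y : X => a (top (ι x)) (top (ι y))) g) :
    ∃ h : W → A, ∀ u w, {u, w} ∈ L.faces → a u w = h w - h u := by
  rcases isEmpty_or_nonempty X with hX | hX
  · refine ⟨fun _ => 0, fun u w huw => ?_⟩
    have : (Pi.single u 1 : W → ℝ) ∈ L.space :=
      single_mem_space (L.down_closed _ huw _ (by simp) (by simp))
    rw [← hr] at this
    obtain ⟨x, -⟩ := this
    exact hX.elim x
  have hinv : ∀ x, invFun ι (ι x) = x := leftInverse_invFun hι.injective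
  obtain ⟨δ, hδ, hP⟩ := (isCompact_space L).exists_uniform
    (P := fun x y _ => a (top x) (top y) = g (invFun ι y) - g (invFun ι x)) (by
    rw [← hr]
    rintro _ ⟨x₀, rfl⟩
    obtain ⟨u, hu, h⟩ := hg x₀
    obtain ⟨u', hu', h'⟩ := Filter.mem_comap.1 (hι.isInducing.nhds_eq_comap x₀ ▸ hu)
    refine ⟨u', hu', fun x hx y hy _ _ => ?_⟩
    rintro ⟨x, rfl⟩ ⟨y, rfl⟩ _
    simp only [hinv]
    exact h _ (h' hx) _ (h' hy))
  exact ⟨fun w => g (invFun ι (Pi.single w 1)), fun u w huw =>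
    ha.eq_sub htop hδ (g := fun x => g (invFun ι x))
      (fun x hx y hy hxy => hP x hx y hy x hx hxy (by simpa)) huw⟩

end

/-- A criterion for the restriction from a polyhedron to a subpolyhedron to be an isomorphism
in degree one, in terms of simplicial cocycles. -/
lemma bijective_ASHmap_one [Nonempty W] {L₁ L₂ : FinSimpComplex W} (hL : L₁.faces ⊆ L₂.faces)
    {Y : Type*} [TopologicalSpace Y] {κ : Y → W → ℝ} {f : X → Y} (hf : Continuous f)
    (hfκ : ∀ x, κ (f x) = ι x)
    (hι : Topology.IsEmbedding ι) (hιr : range ι = L₁.space)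
    (hκ : Topology.IsEmbedding κ) (hκr : range κ = L₂.space)
    (hinj : ∀ a : W → W → A, L₂.IsSimplicialCocycle a → ∀ h : W → A,
      (∀ u w, {u, w} ∈ L₁.faces → a u w = h w - h u) →
      ∃ H : W → A, ∀ u w, {u, w} ∈ L₂.faces → a u w = H w - H u)
    (hsurj : ∀ a : W → W → A, L₁.IsSimplicialCocycle a →
      ∃ a' : W → W → A, L₂.IsSimplicialCocycle a' ∧
        ∀ u w, {u, w} ∈ L₁.faces → a' u w = a u w) :
    Bijective (ASHmap A hf 1) := by
  choose top htop using fun y : W → ℝ => Finite.exists_max y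
  constructor
  · refine ASHmap_one_injective hf fun φ hφ ⟨g, hg⟩ => ?_
    obtain ⟨a, ha, g₂, hg₂⟩ := exists_simplicialCocycle hκ hκr htop hφ
    have hg₁ : IsLocPotential (fun x y : X => a (top (ι x)) (top (ι y)))
        fun x => g x - g₂ (f x) := by
      intro x₀
      obtain ⟨u, hu, h⟩ := hg x₀
      obtain ⟨u₂, hu₂, h₂⟩ := hg₂ (f x₀)
      refine ⟨u ∩ f ⁻¹' u₂, Filter.inter_mem hu (hf.continuousAt.preimage_mem_nhds hu₂),
        fun x hx y hy => ?_⟩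
      have e := h x hx.1 y hy.1
      have e₂ := h₂ _ hx.2 _ hy.2
      simp only [hfκ] at e e₂ ⊢
      rw [e] at e₂
      rw [← sub_sub_self (g y - g x) (a (top (ι x)) (top (ι y))), e₂]
      abel
    obtain ⟨h, hh⟩ := IsSimplicialCocycle.eq_sub_of_isLocPotential hι hιr htop
      (fun u v w huvw => ha u v w (hL huvw)) hg₁
    obtain ⟨H, hH⟩ := hinj a ha h hh
    have hg₃ := isLocPotential_of_eq_sub hκ hκr htop hH
    refine ⟨fun y => g₂ y + H (top (κ y)), fun y₀ => ?_⟩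
    obtain ⟨u₂, hu₂, h₂⟩ := hg₂ y₀
    obtain ⟨u₃, hu₃, h₃⟩ := hg₃ y₀
    refine ⟨u₂ ∩ u₃, Filter.inter_mem hu₂ hu₃, fun x hx y hy => ?_⟩
    have e₂ := h₂ x hx.1 y hy.1
    have e₃ := h₃ x hx.2 y hy.2
    simp only at e₂ e₃ ⊢
    rw [← sub_add_cancel (φ x y) (a (top (κ x)) (top (κ y))), e₂, e₃]
    abel
  · refine ASHmap_one_surjective hf fun ψ hψ => ?_
    obtain ⟨a, ha, g, hg⟩ := exists_simplicialCocycle hι hιr htop hψ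
    obtain ⟨a', ha', haa⟩ := hsurj a ha
    have hg₀ := isLocPotential_of_eq_sub (a := fun u w => a' u w - a u w) (h := fun _ => 0)
      hι hιr htop fun u w huw => by simp [haa u w huw]
    refine ⟨_, ha'.isLocCocycle hκ hκr htop, fun x => -g x, fun x₀ => ?_⟩
    obtain ⟨u, hu, h⟩ := hg x₀
    obtain ⟨u₀, hu₀, h₀⟩ := hg₀ x₀
    refine ⟨u ∩ u₀, Filter.inter_mem hu hu₀, fun x hx y hy => ?_⟩
    have e := h x hx.1 y hy.1
    have e₀ := h₀ x hx.2 y hy.2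
    simp only [hfκ] at e e₀ ⊢
    rw [← sub_sub_sub_cancel_right _ _ (a (top (ι x)) (top (ι y))), e₀, e]
    abel

end FinSimpComplex
/-! ### Flag weights -/

section FlagWeight

variable {α : Type*} [Fintype α] [DecidableEq α] {t t' : Finset α → ℝ}

/-- Nonnegative weights on the nonempty subsets of `α` whose support is a chain; these are
the (homogeneous) barycentric coordinates on the barycentric subdivision. -/
structure IsFlagWeight (t : Finset α → ℝ) : Prop where
  nonneg : ∀ σ, 0 ≤ t σ
  empty : t ∅ = 0
  chain : IsChain (· ⊆ ·) {σ | t σ ≠ 0}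

/-- The identification of the barycentric subdivision with the original simplex. -/
def flagPush (t : Finset α → ℝ) (v : α) : ℝ := ∑ σ, if v ∈ σ then t σ / σ.card else 0

omit [Fintype α] [DecidableEq α] in
lemma card_pos_of_mem {σ : Finset α} {v : α} (hv : v ∈ σ) : (0 : ℝ) < σ.card :=
  Nat.cast_pos.2 (Finset.card_pos.2 ⟨v, hv⟩)

lemma flagPush_nonneg (h : ∀ σ, 0 ≤ t σ) (v : α) : 0 ≤ flagPush t v :=
  Finset.sum_nonneg fun σ _ => by
    split_ifs
    exacts [div_nonneg (h σ) (Nat.cast_nonneg _), le_rfl]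

lemma le_flagPush (h : ∀ σ, 0 ≤ t σ) {v : α} {σ : Finset α} (hv : v ∈ σ) :
    t σ / σ.card ≤ flagPush t v := by
  have := Finset.single_le_sum (f := fun σ : Finset α => if v ∈ σ then t σ / σ.card else 0)
    (fun σ _ => by
      split_ifs
      exacts [div_nonneg (h σ) (Nat.cast_nonneg _), le_rfl]) (Finset.mem_univ σ)
  simpa only [hv, if_true, flagPush] using this

lemma flagPush_ne_zero_iff (h : ∀ σ, 0 ≤ t σ) {v : α} :
    flagPush t v ≠ 0 ↔ ∃ σ, v ∈ σ ∧ t σ ≠ 0 := by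
  constructor
  · intro hne
    obtain ⟨σ, -, hσ⟩ := Finset.exists_ne_zero_of_sum_ne_zero hne
    by_cases hv : v ∈ σ
    · exact ⟨σ, hv, fun h0 => hσ (by simp [h0])⟩
    · exact absurd (if_neg hv) hσ
  · rintro ⟨σ, hv, hσ⟩
    have : 0 < t σ / σ.card :=
      div_pos (lt_of_le_of_ne (h σ) hσ.symm) (card_pos_of_mem hv)
    exact (this.trans_le (le_flagPush h hv)).ne'

lemma sum_flagPush (h : t ∅ = 0) : ∑ v, flagPush t v = ∑ σ, t σ := by
  simp only [flagPush]
  rw [Finset.sum_comm]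
  refine Finset.sum_congr rfl fun σ _ => ?_
  rw [← Finset.sum_filter, Finset.sum_const, Finset.filter_univ_mem, nsmul_eq_mul]
  rcases σ.eq_empty_or_nonempty with rfl | hne
  · simp [h]
  · rw [mul_div_cancel₀]
    exact_mod_cast hne.card_pos.ne'

namespace IsFlagWeight

omit [DecidableEq α] in
lemma exists_max (h : IsFlagWeight t) (hne : ∃ σ, t σ ≠ 0) :
    ∃ M, t M ≠ 0 ∧ ∀ σ, t σ ≠ 0 → σ ⊆ M := by
  obtain ⟨M, hM, hmax⟩ := Finset.exists_max_image (Finset.univ.filter fun σ => t σ ≠ 0)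
    Finset.card (by obtain ⟨σ, hσ⟩ := hne; exact ⟨σ, by simpa using hσ⟩)
  simp only [Finset.mem_filter, Finset.mem_univ, true_and] at hM hmax
  refine ⟨M, hM, fun σ hσ => ?_⟩
  rcases h.chain.total hσ hM with h' | h'
  · exact h'
  · exact (Finset.eq_of_subset_of_card_le h' (hmax σ hσ)).ge

omit [Fintype α] in
lemma update_zero (h : IsFlagWeight t) (M : Finset α) : IsFlagWeight (update t M 0) := by
  refine ⟨fun σ => ?_, ?_, h.chain.mono fun σ hσ => ?_⟩
  · by_cases hσ : σ = M
    · simp [hσ]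
    · simpa [hσ] using h.nonneg σ
  · by_cases hσ : ∅ = M
    · simp [← hσ]
    · simpa [hσ] using h.empty
  · by_cases hσM : σ = M
    · simp [hσM] at hσ
    · simpa [hσM] using hσ

lemma exists_mem_of_max (h : IsFlagWeight t) {M : Finset α} (hM : t M ≠ 0)
    (hmax : ∀ σ, t σ ≠ 0 → σ ⊆ M) : ∃ v ∈ M, ∀ σ, t σ ≠ 0 → v ∈ σ → σ = M := by
  by_cases hex : ∃ σ, update t M 0 σ ≠ 0
  · obtain ⟨N, hN, hNmax⟩ := (h.update_zero M).exists_max hex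
    have hNM : N ≠ M := by rintro rfl; simp at hN
    rw [update_of_ne hNM] at hN
    obtain ⟨v, hvM, hvN⟩ := Finset.exists_of_ssubset
      (Finset.ssubset_iff_subset_ne.2 ⟨hmax N hN, hNM⟩)
    refine ⟨v, hvM, fun σ hσ hv => ?_⟩
    by_contra hσM
    exact hvN (hNmax σ (by rwa [update_of_ne hσM]) hv)
  · push Not at hex
    have hMne : M.Nonempty := by
      rw [Finset.nonempty_iff_ne_empty]
      rintro rfl
      exact hM h.empty
    obtain ⟨v, hv⟩ := hMne
    refine ⟨v, hv, fun σ hσ _ => ?_⟩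
    by_contra hσM
    exact hσ (by simpa [hσM] using hex σ)

lemma flagPush_eq_of_max (v : α) {M : Finset α} (hv : v ∈ M)
    (huniq : ∀ σ, t σ ≠ 0 → v ∈ σ → σ = M) : flagPush t v = t M / M.card := by
  rw [flagPush, Finset.sum_eq_single M]
  · simp [hv]
  · intro σ _ hσ
    split_ifs with hvσ
    · by_cases h0 : t σ = 0
      · simp [h0]
      · exact absurd (huniq σ h0 hvσ) hσ
    · rfl
  · simp

lemma flagPush_update (M : Finset α) (v : α) :
    flagPush (update t M 0) v = flagPush t v - if v ∈ M then t M / M.card else 0 := by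
  rw [eq_sub_iff_add_eq, flagPush, flagPush,
    ← Finset.add_sum_erase Finset.univ _ (Finset.mem_univ M),
    ← Finset.add_sum_erase Finset.univ (fun σ : Finset α => if v ∈ σ then t σ / σ.card else 0)
      (Finset.mem_univ M)]
  rw [Finset.sum_congr rfl (g := fun σ : Finset α => if v ∈ σ then t σ / σ.card else 0)]
  · simp [add_comm]
  · intro σ hσ
    rw [update_of_ne (Finset.ne_of_mem_erase hσ)]

lemma eq_of_flagPush_eq (h : IsFlagWeight t) (h' : IsFlagWeight t')
    (heq : flagPush t = flagPush t') : t = t' := by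
  induction hn : (Finset.univ.filter fun σ => t σ ≠ 0).card generalizing t t' with
  | zero =>
    have h0 : ∀ σ, t σ = 0 := by simpa [Finset.filter_eq_empty_iff] using hn
    funext σ
    rw [h0]
    by_contra hσ
    obtain ⟨M, hM, hmax⟩ := h'.exists_max ⟨σ, Ne.symm hσ⟩
    obtain ⟨v, hv, -⟩ := h'.exists_mem_of_max hM hmax
    have := (flagPush_ne_zero_iff h'.nonneg).2 ⟨M, hv, hM⟩
    rw [← heq, flagPush_ne_zero_iff h.nonneg] at this
    obtain ⟨τ, -, hτ⟩ := this
    exact hτ (h0 τ)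
  | succ n ih =>
    obtain ⟨σ, hσ⟩ : ∃ σ, t σ ≠ 0 := by
      obtain ⟨σ, hσ⟩ := Finset.card_pos.1 (n.succ_pos.trans_eq hn.symm)
      exact ⟨σ, by simpa using hσ⟩
    obtain ⟨M, hM, hmax⟩ := h.exists_max ⟨σ, hσ⟩
    obtain ⟨v, hv, huniq⟩ := h.exists_mem_of_max hM hmax
    have hsupp : ∀ v, v ∈ M ↔ flagPush t v ≠ 0 := fun v => by
      rw [flagPush_ne_zero_iff h.nonneg]
      exact ⟨fun hv => ⟨M, hv, hM⟩, fun ⟨σ, hv, hσ⟩ => hmax σ hσ hv⟩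
    obtain ⟨M', hM', hmax'⟩ := h'.exists_max (by
      obtain ⟨σ, -, hσ⟩ := (flagPush_ne_zero_iff h'.nonneg).1 (heq ▸ (hsupp v).1 hv)
      exact ⟨σ, hσ⟩)
    obtain ⟨v', hv', huniq'⟩ := h'.exists_mem_of_max hM' hmax'
    obtain rfl : M = M' := by
      ext v
      rw [hsupp, heq, flagPush_ne_zero_iff h'.nonneg]
      exact ⟨fun ⟨σ, hv, hσ⟩ => hmax' σ hσ hv, fun hv => ⟨M', hv, hM'⟩⟩
    have hval : t M / M.card = t' M / M.card := by
      refine le_antisymm ?_ ?_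
      · rw [← flagPush_eq_of_max v' hv' huniq', ← heq]
        exact le_flagPush h.nonneg hv'
      · rw [← flagPush_eq_of_max v hv huniq, heq]
        exact le_flagPush h'.nonneg hv
    have hupd : update t M 0 = update t' M 0 := by
      refine ih (h.update_zero M) (h'.update_zero M) ?_ ?_
      · funext v
        rw [flagPush_update, flagPush_update, heq, hval]
      · have : (Finset.univ.filter fun σ => update t M 0 σ ≠ 0) =
            (Finset.univ.filter fun σ => t σ ≠ 0).erase M := by
          ext σ
          by_cases hσM : σ = M
          · simp [hσM]
          · simp [hσM]
        rw [this, Finset.card_erase_of_mem (by simpa using hM), hn, Nat.add_sub_cancel]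
    funext σ
    by_cases hσM : σ = M
    · rw [hσM]
      exact (div_left_inj' (card_pos_of_mem hv).ne').1 hval
    · simpa [hσM] using congrFun hupd σ

lemma exists_flagPush_eq {y : α → ℝ} (hy : ∀ v, 0 ≤ y v) :
    ∃ t, IsFlagWeight t ∧ flagPush t = y := by
  induction hn : (Finset.univ.filter fun v => y v ≠ 0).card using Nat.strong_induction_on
    generalizing y with
  | _ n ih =>
    set S := Finset.univ.filter fun v => y v ≠ 0 with hS
    rcases S.eq_empty_or_nonempty with he | hne
    · refine ⟨0, ⟨fun _ => le_rfl, rfl, fun σ hσ => absurd rfl hσ⟩, ?_⟩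
      funext v
      have : y v = 0 := by
        by_contra h0
        have hv : v ∈ S := Finset.mem_filter.2 ⟨Finset.mem_univ v, h0⟩
        rw [he] at hv
        exact absurd hv (Finset.notMem_empty v)
      simp [flagPush, this]
    · obtain ⟨v₀, hv₀, hmin⟩ := Finset.exists_min_image S y hne
      have hmem : ∀ v, v ∈ S ↔ y v ≠ 0 := fun v => by simp [hS]
      set y' : α → ℝ := fun v => y v - if v ∈ S then y v₀ else 0 with hy'
      have hy'0 : ∀ v, y v = 0 → y' v = 0 := fun v hv => by simp [hy', hmem, hv]
      have hsub : (Finset.univ.filter fun v => y' v ≠ 0) ⊂ S := by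
        refine Finset.ssubset_iff_subset_ne.2 ⟨fun v hv => ?_, fun e => ?_⟩
        · rw [hmem]
          intro h0
          simp [hy'0 v h0] at hv
        · have : y' v₀ ≠ 0 := by
            have := e ▸ hv₀
            simpa using this
          exact this (by simp [hy', hv₀])
      obtain ⟨t, ht, hty⟩ := ih _ (hn ▸ Finset.card_lt_card hsub) (y := y') (fun v => by
        simp only [hy']
        split_ifs with hv
        · linarith [hmin v hv]
        · simpa using hy v) rfl
      have htS : ∀ σ, t σ ≠ 0 → σ ⊂ S := fun σ hσ => by
        refine lt_of_le_of_lt (fun v hv => ?_) hsub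
        rw [Finset.mem_filter, ← hty]
        exact ⟨Finset.mem_univ _, (flagPush_ne_zero_iff ht.nonneg).2 ⟨σ, hv, hσ⟩⟩
      have htS0 : t S = 0 := by
        by_contra h0
        exact (htS S h0).ne rfl
      have hSc : (0 : ℝ) < S.card := card_pos_of_mem hv₀
      refine ⟨update t S (y v₀ * S.card), ⟨fun σ => ?_, ?_, ?_⟩, ?_⟩
      · by_cases hσ : σ = S
        · simpa [hσ] using mul_nonneg (hy v₀) hSc.le
        · simpa [hσ] using ht.nonneg σ
      · rw [update_of_ne hne.ne_empty.symm, ht.empty]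
      · intro σ hσ τ hτ hne'
        by_cases hσS : σ = S
        · subst hσS
          have : t τ ≠ 0 := by simpa [update_of_ne hne'.symm] using hτ
          exact .inr (htS τ this).subset
        · have h1 : t σ ≠ 0 := by simpa [update_of_ne hσS] using hσ
          by_cases hτS : τ = S
          · subst hτS
            exact .inl (htS σ h1).subset
          · have h2 : t τ ≠ 0 := by simpa [update_of_ne hτS] using hτ
            exact ht.chain h1 h2 hne'
      · funext v
        have h1 := flagPush_update (t := update t S (y v₀ * S.card)) S v
        have h2 : update t S 0 = t := by rw [← htS0, update_eq_self]
        rw [update_idem, h2, hty, update_self, mul_div_cancel_right₀ _ hSc.ne'] at h1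
        simp only [hy'] at h1
        linarith

end IsFlagWeight

end FlagWeight
/-! ### Chain complexes of finite posets -/

section ChainComplex

variable {P : Type*} [PartialOrder P] [Fintype P] [DecidableEq P] {S T : Set P}

open scoped Classical in
/-- The order complex of a subset of a finite poset. -/
def orderComplex (S : Set P) : FinSimpComplex P where
  faces := {s | s.Nonempty ∧ (∀ w ∈ s, w ∈ S) ∧ IsChain (· ≤ ·) (s : Set P)}
  nonempty_of_mem s hs := by simp only [Finset.mem_filter] at hs; exact hs.2.1
  down_closed s hs t hts hne := by
    simp only [Finset.mem_filter, Finset.mem_univ, true_and] at hs ⊢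
    exact ⟨hne, fun w hw => hs.2.1 w (hts hw), hs.2.2.mono (by exact_mod_cast hts)⟩

lemma mem_orderComplex {s : Finset P} : s ∈ (orderComplex S).faces ↔
    s.Nonempty ∧ (∀ w ∈ s, w ∈ S) ∧ IsChain (· ≤ ·) (s : Set P) := by
  simp [orderComplex]

lemma orderComplex_mono (h : S ⊆ T) : (orderComplex S).faces ⊆ (orderComplex T).faces :=
  fun s hs => by
    rw [mem_orderComplex] at hs ⊢
    exact ⟨hs.1, fun w hw => h (hs.2.1 w hw), hs.2.2⟩

lemma mem_orderComplex_space {x : P → ℝ} : x ∈ (orderComplex S).space ↔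
    (∀ w, 0 ≤ x w) ∧ ∑ w, x w = 1 ∧ (∀ w, x w ≠ 0 → w ∈ S) ∧
      IsChain (· ≤ ·) {w | x w ≠ 0} := by
  refine and_congr_right fun _ => and_congr_right fun hsum => ⟨?_, ?_⟩
  · rintro ⟨s, hs, hx⟩
    rw [mem_orderComplex] at hs
    exact ⟨fun w hw => hs.2.1 w (hx w hw), hs.2.2.mono fun w hw => hx w hw⟩
  · rintro ⟨h1, h2⟩
    refine ⟨Finset.univ.filter fun w => x w ≠ 0, mem_orderComplex.2 ⟨?_, ?_, ?_⟩, by simp⟩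
    · by_contra he
      rw [Finset.not_nonempty_iff_eq_empty, Finset.filter_eq_empty_iff] at he
      have : ∀ w, x w = 0 := by simpa using he
      simp [this] at hsum
    · simpa using h1
    · simpa using h2

lemma pair_mem_orderComplex {u w : P} : {u, w} ∈ (orderComplex S).faces ↔
    u ∈ S ∧ w ∈ S ∧ (u ≤ w ∨ w ≤ u) := by
  rw [mem_orderComplex]
  constructor
  · rintro ⟨-, h1, h2⟩
    exact ⟨h1 u (by simp), h1 w (by simp), h2.total (by simp) (by simp)⟩
  · rintro ⟨hu, hw, h⟩
    refine ⟨by simp, by simp [hu, hw], ?_⟩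
    rcases h with h | h
    · rw [Finset.coe_pair]
      exact IsChain.pair h
    · rw [Finset.pair_comm, Finset.coe_pair]
      exact IsChain.pair h

open Resolution FinSimpComplex

variable {A : Type*} [AddCommGroup A] {a : P → P → A}

lemma isCocycleOn_of_isSimplicialCocycle (ha : (orderComplex S).IsSimplicialCocycle a) :
    IsCocycleOn S a := by
  intro u hu v hv w hw huv hvw
  refine ha u v w (mem_orderComplex.2 ⟨by simp, by simp [hu, hv, hw], ?_⟩)
  rw [Finset.coe_insert, Finset.coe_pair]
  refine (IsChain.pair hvw).insert fun x hx _ => .inl ?_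
  rcases hx with rfl | rfl
  exacts [huv, huv.trans hvw]

omit [PartialOrder P] in
lemma FinSimpComplex.IsSimplicialCocycle.antisymm {L : FinSimpComplex P}
    (ha : L.IsSimplicialCocycle a) {u w : P} (h : {u, w} ∈ L.faces) : a u w = -a w u := by
  have h1 := ha u u u (L.down_closed _ h _ (by simp) (by simp))
  have h2 := ha u w u (by
    rwa [show ({u, w, u} : Finset P) = {u, w} by ext; simp; tauto])
  rw [left_eq_add] at h1
  rw [h1] at h2
  exact eq_neg_of_add_eq_zero_left h2.symm

open scoped Classical in
/-- The alternating extension of a function on the pairs `u ≤ w`. -/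
def altExt (a : P → P → A) (u w : P) : A := if u ≤ w then a u w else -a w u

lemma Resolution.IsCocycleOn.isSimplicialCocycle_altExt (ha : IsCocycleOn S a) :
    (orderComplex S).IsSimplicialCocycle (altExt a) := by
  have hrev : ∀ u ∈ S, ∀ w ∈ S, w ≤ u → altExt a u w = -a w u := by
    intro u hu w hw h
    by_cases h' : u ≤ w
    · obtain rfl := le_antisymm h h'
      rw [altExt, if_pos le_rfl, ha.self hu, neg_zero]
    · rw [altExt, if_neg h']
  have hfwd : ∀ u w, u ≤ w → altExt a u w = a u w := fun u w h => if_pos h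
  intro u v w h
  rw [mem_orderComplex] at h
  obtain ⟨-, hS, hc⟩ := h
  have hu := hS u (by simp)
  have hv := hS v (by simp)
  have hw := hS w (by simp)
  have huv := hc.total (x := u) (y := v) (by simp) (by simp)
  have hvw := hc.total (x := v) (y := w) (by simp) (by simp)
  have huw := hc.total (x := u) (y := w) (by simp) (by simp)
  rcases huv with huv | huv <;> rcases hvw with hvw | hvw
  · rw [hfwd _ _ huv, hfwd _ _ hvw, hfwd _ _ (huv.trans hvw)]
    exact ha u hu v hv w hw huv hvw
  · rw [hfwd _ _ huv, hrev v hv w hw hvw]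
    rcases huw with huw | huw
    · rw [hfwd _ _ huw, ha u hu w hw v hv huw hvw]
      abel
    · rw [hrev u hu w hw huw, ha w hw u hu v hv huw huv]
      abel
  · rw [hrev u hu v hv huv, hfwd _ _ hvw]
    rcases huw with huw | huw
    · rw [hfwd _ _ huw, ha v hv u hu w hw huv huw]
      abel
    · rw [hrev u hu w hw huw, ha v hv w hw u hu hvw huw]
      abel
  · rw [hrev u hu v hv huv, hrev v hv w hw hvw, hrev u hu w hw (hvw.trans huv),
      ha w hw v hv u hu hvw huv]
    abel

/-- A criterion for the restriction to a sub-order complex to be an isomorphism in degree one. -/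
lemma bijective_ASHmap_one_orderComplex [Nonempty P] (hST : S ⊆ T)
    {X Y : Type*} [TopologicalSpace X] [TopologicalSpace Y] {ι : X → P → ℝ} {κ : Y → P → ℝ}
    {f : X → Y} (hf : Continuous f) (hfκ : ∀ x, κ (f x) = ι x)
    (hι : Topology.IsEmbedding ι) (hιr : range ι = (orderComplex S).space)
    (hκ : Topology.IsEmbedding κ) (hκr : range κ = (orderComplex T).space)
    (hinj : ∀ a : P → P → A, IsCocycleOn T a → ∀ h : P → A,
      (∀ u ∈ S, ∀ w ∈ S, u ≤ w → a u w = h w - h u) →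
      ∃ H : P → A, ∀ u ∈ T, ∀ w ∈ T, u ≤ w → a u w = H w - H u)
    (hsurj : ∀ a : P → P → A, IsCocycleOn S a →
      ∃ a' : P → P → A, IsCocycleOn T a' ∧ ∀ u ∈ S, ∀ w ∈ S, u ≤ w → a' u w = a u w) :
    Bijective (AS.ASHmap A hf 1) := by
  refine bijective_ASHmap_one (orderComplex_mono hST) hf hfκ hι hιr hκ hκr
    (fun a ha h hh => ?_) fun a ha => ?_
  · obtain ⟨H, hH⟩ := hinj a (isCocycleOn_of_isSimplicialCocycle ha) h
      fun u hu w hw huw => hh u w (pair_mem_orderComplex.2 ⟨hu, hw, .inl huw⟩)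
    refine ⟨H, fun u w huw => ?_⟩
    obtain ⟨hu, hw, h' | h'⟩ := pair_mem_orderComplex.1 huw
    · exact hH u hu w hw h'
    · rw [ha.antisymm huw, hH w hw u hu h', neg_sub]
  · obtain ⟨a', ha', h⟩ := hsurj a (isCocycleOn_of_isSimplicialCocycle ha)
    refine ⟨altExt a', IsCocycleOn.isSimplicialCocycle_altExt ha', fun u w huw => ?_⟩
    obtain ⟨hu, hw, h'⟩ := pair_mem_orderComplex.1 huw
    by_cases hle : u ≤ w
    · rw [altExt, if_pos hle, h u hu w hw hle]
    · rw [altExt, if_neg hle, h w hw u hu (h'.resolve_left hle), ha.antisymm huw]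

end ChainComplex

namespace Resolution

variable {p : ℕ} {V : Type} {F F' : Finset (Finset V)} {u v v' : V}
  {b b' : Finset V → Coeff p V} {w w' : Vert p V} {σ : Finset V}

/-- Translation of the vertices of the resolution. -/
def act (g : Finset V → Coeff p V) (w : Vert p V) : Vert p V :=
  mk (flag w) (rep w).base ((rep w).shift + g)

lemma act_mk (g : Finset V → Coeff p V) : act g (mk F v b) = mk F v (b + g) := by
  obtain ⟨h1, ζ, h2, h3⟩ := mk_eq_iff.1 (mk_rep (mk F v b))
  rw [h1] at h2 h3
  rw [act, flag_mk]
  exact mk_eq h2 fun τ hτ hc => by rw [Pi.add_apply, Pi.add_apply, h3 τ hτ hc]; abel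

lemma act_act (g g' : Finset V → Coeff p V) (w : Vert p V) : act g' (act g w) = act (g + g') w := by
  obtain ⟨F, v, b, rfl⟩ := exists_rep w
  simp only [act_mk, add_assoc]

lemma act_zero (w : Vert p V) : act 0 w = w := by
  obtain ⟨F, v, b, rfl⟩ := exists_rep w
  rw [act_mk, add_zero]

lemma flag_act (g : Finset V → Coeff p V) (w : Vert p V) : flag (act g w) = flag w := by
  obtain ⟨F, v, b, rfl⟩ := exists_rep w
  rw [act_mk, flag_mk, flag_mk]

lemma act_mono (g : Finset V → Coeff p V) (h : w ≤ w') : act g w ≤ act g w' := by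
  obtain ⟨F, F', v, b, hF, rfl, rfl⟩ := exists_common h
  rw [act_mk, act_mk]
  exact mk_mono v _ hF

lemma act_mem_over (g : Finset V → Coeff p V) (h : w ∈ Over σ) : act g w ∈ Over σ := by
  obtain ⟨F, v, b, rfl⟩ := exists_rep w
  rw [act_mk]
  exact mk_mem_over.2 (mk_mem_over.1 h)

/-- The action by translations, as permutations. -/
def actEquiv (g : Finset V → Coeff p V) : Vert p V ≃ Vert p V where
  toFun := act g
  invFun := act (-g)
  left_inv w := by rw [act_act, add_neg_cancel, act_zero]
  right_inv w := by rw [act_act, neg_add_cancel, act_zero]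

variable [Fintype V] [DecidableEq V]

instance [NeZero p] : Finite (Vert p V) := by
  have : Finite (Rep p V) := Finite.of_injective
    (fun x : Rep p V => (x.flag, x.base, x.shift)) fun x y h => by
      cases x; cases y; simpa using h
  exact Quotient.finite _

variable [Fintype (Vert p V)] [DecidableEq (Vert p V)] {K : FinSimpComplex V}
  {x y : Vert p V → ℝ}

variable (p) in
/-- The vertices of the resolution of `K`. -/
def Verts (K : FinSimpComplex V) : Set (Vert p V) := {w | ∃ σ ∈ K.faces, w ∈ Over σ}

/-- The total weight of the vertices with given flag. -/
def flagSum (x : Vert p V → ℝ) (F : Finset (Finset V)) : ℝ := ∑ w, if flag w = F then x w else 0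

omit [Fintype V] [DecidableEq (Vert p V)] in
lemma flagSum_nonneg (hx : ∀ w, 0 ≤ x w) (F : Finset (Finset V)) : 0 ≤ flagSum x F :=
  Finset.sum_nonneg fun w _ => by split_ifs; exacts [hx w, le_rfl]

omit [Fintype V] [DecidableEq (Vert p V)] in
lemma flagSum_ne_zero_iff (hx : ∀ w, 0 ≤ x w) {F : Finset (Finset V)} :
    flagSum x F ≠ 0 ↔ ∃ w, x w ≠ 0 ∧ flag w = F := by
  rw [flagSum, Ne, Finset.sum_eq_zero_iff_of_nonneg fun w _ => by
    split_ifs; exacts [hx w, le_rfl]]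
  simp only [Finset.mem_univ, true_implies, ite_eq_right_iff, not_forall]
  exact exists_congr fun w => by tauto

omit [DecidableEq (Vert p V)] in
lemma sum_flagSum (x : Vert p V → ℝ) : ∑ F, flagSum x F = ∑ w, x w := by
  simp only [flagSum]
  rw [Finset.sum_comm]
  exact Finset.sum_congr rfl fun w _ => by simp

/-- The orbit map in barycentric coordinates. -/
def proj (x : Vert p V → ℝ) : V → ℝ := flagPush (flagPush (flagSum x))

lemma isFlagWeight_flagSum (hx : x ∈ (orderComplex (Verts p K)).space) :
    IsFlagWeight (flagSum x) := by
  rw [mem_orderComplex_space] at hx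
  obtain ⟨h0, -, hS, hc⟩ := hx
  refine ⟨flagSum_nonneg h0, ?_, ?_⟩
  · by_contra hne
    obtain ⟨w, hw, he⟩ := (flagSum_ne_zero_iff h0).1 hne
    obtain ⟨σ, -, hσ⟩ := hS w hw
    exact hσ.1.ne_empty he
  · intro F hF F' hF' _
    obtain ⟨w, hw, rfl⟩ := (flagSum_ne_zero_iff h0).1 hF
    obtain ⟨w', hw', rfl⟩ := (flagSum_ne_zero_iff h0).1 hF'
    exact (hc.total hw hw').imp flag_mono flag_mono

omit [DecidableEq (Vert p V)] in
lemma flagPush_flagSum_ne_zero_iff (hx : ∀ w, 0 ≤ x w) {τ : Finset V} :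
    flagPush (flagSum x) τ ≠ 0 ↔ ∃ w, x w ≠ 0 ∧ τ ∈ flag w := by
  rw [flagPush_ne_zero_iff (flagSum_nonneg hx)]
  simp only [flagSum_ne_zero_iff hx]
  exact ⟨fun ⟨F, hτ, w, hw, he⟩ => ⟨w, hw, he ▸ hτ⟩, fun ⟨w, hw, hτ⟩ => ⟨_, hτ, w, hw, rfl⟩⟩

omit [DecidableEq (Vert p V)] in
lemma proj_ne_zero_iff (hx : ∀ w, 0 ≤ x w) :
    proj x v ≠ 0 ↔ ∃ w, x w ≠ 0 ∧ ∃ τ ∈ flag w, v ∈ τ := by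
  rw [proj, flagPush_ne_zero_iff (flagPush_nonneg (flagSum_nonneg hx))]
  simp only [flagPush_flagSum_ne_zero_iff hx]
  exact ⟨fun ⟨τ, hv, w, hw, hτ⟩ => ⟨w, hw, τ, hτ, hv⟩,
    fun ⟨w, hw, τ, hτ, hv⟩ => ⟨τ, hv, w, hw, hτ⟩⟩

lemma isFlagWeight_flagPush_flagSum (hx : x ∈ (orderComplex (Verts p K)).space) :
    IsFlagWeight (flagPush (flagSum x)) := by
  rw [mem_orderComplex_space] at hx
  obtain ⟨h0, -, hS, hc⟩ := hx
  refine ⟨flagPush_nonneg (flagSum_nonneg h0), ?_, ?_⟩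
  · by_contra hne
    obtain ⟨w, hw, he⟩ := (flagPush_flagSum_ne_zero_iff h0).1 hne
    obtain ⟨σ, -, hσ⟩ := hS w hw
    exact Finset.notMem_empty _ (hσ.3 _ he)
  · intro τ hτ τ' hτ' _
    obtain ⟨w, hw, hτ⟩ := (flagPush_flagSum_ne_zero_iff h0).1 hτ
    obtain ⟨w', hw', hτ'⟩ := (flagPush_flagSum_ne_zero_iff h0).1 hτ'
    rcases hc.total hw hw' with h | h
    · obtain ⟨σ, -, hσ⟩ := hS w' hw'
      exact hσ.2.total (flag_mono h hτ) hτ'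
    · obtain ⟨σ, -, hσ⟩ := hS w hw
      have hτw := flag_mono h hτ'
      exact hσ.2.total hτ hτw

/-- The point with prescribed flag weights all of whose vertices have the same base and shift. -/
def liftPt (s : Finset (Finset V) → ℝ) (v : V) (b : Finset V → Coeff p V) (w : Vert p V) : ℝ :=
  open scoped Classical in if w = mk (flag w) v b then s (flag w) else 0

lemma exists_top (hx : x ∈ (orderComplex (Verts p K)).space) :
    ∃ w, x w ≠ 0 ∧ ∀ w', x w' ≠ 0 → w' ≤ w := by
  rw [mem_orderComplex_space] at hx
  obtain ⟨h0, hsum, hS, hc⟩ := hx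
  obtain ⟨w, hw⟩ : ∃ w, x w ≠ 0 := by
    by_contra! h
    simp [h] at hsum
  obtain ⟨w, hw, hmax⟩ := (Set.toFinite {w | x w ≠ 0}).exists_maximal ⟨w, hw⟩
  exact ⟨w, hw, fun w' hw' => (hc.total hw' hw).elim id fun h => hmax hw' h⟩

lemma exists_eq_liftPt (hx : x ∈ (orderComplex (Verts p K)).space) :
    ∃ σ ∈ K.faces, ∃ F v b, IsGood σ F v ∧ flagSum x F ≠ 0 ∧
      (∀ F', flagSum x F' ≠ 0 → F' ⊆ F) ∧ x = liftPt (flagSum x) v b := by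
  obtain ⟨w, hw, hmax⟩ := exists_top hx
  rw [mem_orderComplex_space] at hx
  obtain ⟨h0, hsum, hS, hc⟩ := hx
  obtain ⟨σ, hσ, hwσ⟩ := hS w hw
  obtain ⟨F, v, b, rfl⟩ := exists_rep w
  have hrep : ∀ w', x w' ≠ 0 → w' = mk (flag w') v b := fun w' hw' => by
    obtain ⟨F', -, rfl⟩ := exists_of_le_mk (hmax w' hw')
    rw [flag_mk]
  refine ⟨σ, hσ, F, v, b, mk_mem_over.1 hwσ, (flagSum_ne_zero_iff h0).2 ⟨_, hw, flag_mk⟩,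
    fun F' hF' => ?_, ?_⟩
  · obtain ⟨w', hw', rfl⟩ := (flagSum_ne_zero_iff h0).1 hF'
    simpa only [flag_mk] using flag_mono (hmax w' hw')
  · funext w'
    rw [liftPt]
    split_ifs with h
    · rw [flagSum, Finset.sum_eq_single w']
      · simp
      · intro w'' _ hne
        split_ifs with hf
        · by_contra hw''
          exact hne ((hrep w'' hw'').trans (hf ▸ h.symm))
        · rfl
      · simp
    · by_contra hw'
      exact h (hrep w' hw')

omit [Fintype V] in
lemma flagSum_liftPt (s : Finset (Finset V) → ℝ) (v : V) (b : Finset V → Coeff p V) :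
    flagSum (liftPt s v b) = s := by
  funext F
  rw [flagSum, Finset.sum_eq_single (mk F v b)]
  · simp [liftPt, flag_mk]
  · intro w _ hw
    split_ifs with hf
    · rw [liftPt, if_neg]
      exact fun h => hw (hf ▸ h)
    · rfl
  · simp

omit [Fintype V] [DecidableEq V] [Fintype (Vert p V)] in
lemma liftPt_act (s : Finset (Finset V) → ℝ) (v : V) (b g : Finset V → Coeff p V)
    (w : Vert p V) : liftPt s v b (act (-g) w) = liftPt s v (b + g) w := by
  have : act (-g) w = mk (flag w) v b ↔ w = mk (flag w) v (b + g) := by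
    rw [← act_mk]
    exact (actEquiv g).symm_apply_eq
  simp only [liftPt, flag_act, this]

end Resolution
namespace Resolution

variable {p : ℕ} {V : Type} [Fintype V] [DecidableEq V] [Fintype (Vert p V)]
  [DecidableEq (Vert p V)] {K : FinSimpComplex V} {x y : Vert p V → ℝ} {σ : Finset V}

omit [DecidableEq (Vert p V)] in
lemma proj_nonneg (hx : ∀ w, 0 ≤ x w) (v : V) : 0 ≤ proj x v :=
  flagPush_nonneg (flagPush_nonneg (flagSum_nonneg hx)) v

lemma proj_mem_space (hx : x ∈ (orderComplex (Verts p K)).space) : proj x ∈ K.space := by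
  have h1 := isFlagWeight_flagSum hx
  have h2 := isFlagWeight_flagPush_flagSum hx
  obtain ⟨w, hw, hmax⟩ := exists_top hx
  rw [mem_orderComplex_space] at hx
  obtain ⟨σ, hσ, hwσ⟩ := hx.2.2.1 w hw
  refine ⟨proj_nonneg hx.1, ?_, σ, hσ, fun v hv => ?_⟩
  · rw [proj, sum_flagPush h2.empty, sum_flagPush h1.empty, sum_flagSum, hx.2.1]
  · obtain ⟨w', hw', τ, hτ, hvτ⟩ := (proj_ne_zero_iff hx.1).1 hv
    exact hwσ.subset τ (flag_mono (hmax w' hw') hτ) hvτ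

omit [DecidableEq (Vert p V)] in
lemma continuous_proj : Continuous (proj : (Vert p V → ℝ) → V → ℝ) := by
  have hpush : ∀ {α : Type} [Fintype α] [DecidableEq α],
      Continuous (flagPush : (Finset α → ℝ) → α → ℝ) := by
    intro α _ _
    refine continuous_pi fun v => continuous_finsetSum _ fun σ _ => ?_
    split_ifs <;> fun_prop
  have hsum : Continuous (flagSum : (Vert p V → ℝ) → Finset (Finset V) → ℝ) := by
    refine continuous_pi fun F => continuous_finsetSum _ fun w _ => ?_
    split_ifs <;> fun_prop
  exact hpush.comp (hpush.comp hsum)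

omit [Fintype V] [DecidableEq (Vert p V)] in
lemma flagSum_comp_act (g : Finset V → Coeff p V) :
    flagSum (fun w => x (act g w)) = flagSum x := by
  funext F
  refine Fintype.sum_equiv (actEquiv g) _ _ fun w => ?_
  change _ = if flag (act g w) = F then x (act g w) else 0
  rw [flag_act]

/-- Points of the resolution with the same flag weights are translates of each other. -/
lemma exists_act_of_proj_eq (hx : x ∈ (orderComplex (Verts p K)).space)
    (hy : y ∈ (orderComplex (Verts p K)).space) (h : proj x = proj y) :
    ∃ g : Finset V → Coeff p V, (fun w => x (act (-g) w)) = y := by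
  have hs : flagSum x = flagSum y :=
    (isFlagWeight_flagSum hx).eq_of_flagPush_eq (isFlagWeight_flagSum hy)
      ((isFlagWeight_flagPush_flagSum hx).eq_of_flagPush_eq (isFlagWeight_flagPush_flagSum hy) h)
  obtain ⟨σ, -, F, v, b, hg, hF, hmax, hxe⟩ := exists_eq_liftPt hx
  obtain ⟨σ', -, F', v', b', hg', hF', hmax', hye⟩ := exists_eq_liftPt hy
  rw [← hs] at hF' hmax' hye
  obtain rfl : F = F' := (hmax' F hF).antisymm (hmax F' hF')
  refine ⟨(b' + fun _ => edge p v' v) - b, funext fun w => ?_⟩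
  have hmk : flagSum x (flag w) ≠ 0 → mk (flag w) v' b' =
      mk (flag w) v (b' + fun _ => edge p v' v) := fun hw =>
    mk_shift b' (fun τ hτ => hg'.3 τ (hmax _ hw hτ)) fun τ hτ => hg.3 τ (hmax _ hw hτ)
  rw [hye]
  conv_lhs => rw [hxe]
  rw [liftPt_act, add_sub_cancel]
  by_cases hw : flagSum x (flag w) = 0
  · simp [liftPt, hw]
  · simp only [liftPt, hmk hw]

lemma exists_proj_eq {y : V → ℝ} (hy : y ∈ K.space) :
    ∃ x ∈ (orderComplex (Verts p K)).space, proj x = y := by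
  obtain ⟨hy0, hy1, σ, hσ, hyσ⟩ := hy
  obtain ⟨t, ht, rfl⟩ := IsFlagWeight.exists_flagPush_eq hy0
  obtain ⟨s, hs, rfl⟩ := IsFlagWeight.exists_flagPush_eq ht.nonneg
  rw [sum_flagPush ht.empty, sum_flagPush hs.empty] at hy1
  obtain ⟨F, hF, hmax⟩ := hs.exists_max <| by
    by_contra! h
    simp [h] at hy1
  have hFt : ∀ τ ∈ F, flagPush s τ ≠ 0 := fun τ hτ =>
    (flagPush_ne_zero_iff hs.nonneg).2 ⟨F, hτ, hF⟩
  have hFc : IsChain (· ⊆ ·) (F : Set (Finset V)) := fun τ hτ τ' hτ' hne =>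
    ht.chain (hFt τ hτ) (hFt τ' hτ') hne
  have hFne : F.Nonempty := by
    rw [Finset.nonempty_iff_ne_empty]
    rintro rfl
    exact hF hs.empty
  obtain ⟨v, hv⟩ : ∃ v, ∀ τ ∈ F, v ∈ τ := by
    obtain ⟨τ, hτ, hmin⟩ := F.exists_minimal hFne
    obtain ⟨v, hv⟩ : τ.Nonempty := by
      rw [Finset.nonempty_iff_ne_empty]
      rintro rfl
      exact hFt _ hτ ht.empty
    exact ⟨v, fun τ' hτ' => ((hFc.total hτ hτ').elim id fun h => hmin hτ' h) hv⟩
  have hgood : IsGood σ F v := ⟨hFne, hFc, hv, fun τ hτ u hu => hyσ u <|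
    (flagPush_ne_zero_iff ht.nonneg).2 ⟨τ, hu, hFt τ hτ⟩⟩
  have hsupp : ∀ w : Vert p V, liftPt s v 0 w ≠ 0 → w = mk (flag w) v 0 ∧ s (flag w) ≠ 0 := by
    intro w hw
    rw [liftPt] at hw
    split_ifs at hw with h
    exacts [⟨h, hw⟩, absurd rfl hw]
  refine ⟨liftPt s v 0, mem_orderComplex_space.2 ⟨fun w => ?_, ?_, fun w hw => ?_, ?_⟩, ?_⟩
  · rw [liftPt]
    split_ifs
    exacts [hs.nonneg _, le_rfl]
  · rw [← sum_flagSum, flagSum_liftPt, hy1]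
  · obtain ⟨h, hw⟩ := hsupp w hw
    refine ⟨σ, hσ, ?_⟩
    rw [h]
    refine mk_mem_over.2 (hgood.mono (hmax _ hw) ?_)
    rw [Finset.nonempty_iff_ne_empty]
    intro he
    exact hw (he ▸ hs.empty)
  · intro w hw w' hw' _
    obtain ⟨h, hw⟩ := hsupp w hw
    obtain ⟨h', hw'⟩ := hsupp w' hw'
    have hc : flag w ⊆ flag w' ∨ flag w' ⊆ flag w := by
      by_cases he : flag w = flag w'
      · exact .inl he.subset
      · exact hs.chain hw hw' he
    rw [h, h']
    exact hc.imp (mk_mono v 0) (mk_mono v 0)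
  · rw [proj, flagSum_liftPt]

lemma proj_support_subset_iff (hx : x ∈ (orderComplex (Verts p K)).space) :
    (∀ v, proj x v ≠ 0 → v ∈ σ) ↔ ∀ w, x w ≠ 0 → w ∈ Over σ := by
  rw [mem_orderComplex_space] at hx
  simp only [proj_ne_zero_iff hx.1]
  constructor
  · intro h w hw
    obtain ⟨ρ, -, hρ⟩ := hx.2.2.1 w hw
    exact ⟨hρ.1, hρ.2, hρ.3, fun τ hτ v hv => h v ⟨w, hw, τ, hτ, hv⟩⟩
  · rintro h v ⟨w, hw, τ, hτ, hv⟩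
    exact (h w hw).4 τ hτ hv

lemma proj_boundary_iff (hx : x ∈ (orderComplex (Verts p K)).space) :
    ((∀ v, proj x v ≠ 0 → v ∈ σ) ∧ ∃ v ∈ σ, proj x v = 0) ↔ ∀ w, x w ≠ 0 → w ∈ OverBdry σ := by
  have hs := proj_support_subset_iff (σ := σ) hx
  have hw2 := isFlagWeight_flagPush_flagSum hx
  have hsp := (proj_mem_space hx).2.1
  have hx0 := (mem_orderComplex_space.1 hx).1
  constructor
  · rintro ⟨h, v, hv, h0⟩ w hw
    refine ⟨hs.1 h w hw, fun hσ => ?_⟩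
    exact (proj_ne_zero_iff hx0).2 ⟨w, hw, σ, hσ, hv⟩ h0
  · intro h
    have h' := hs.2 fun w hw => (h w hw).1
    refine ⟨h', ?_⟩
    by_contra! hne
    obtain ⟨M, hM, hmax⟩ := hw2.exists_max <| by
      by_contra! h0
      have : proj x = 0 := funext fun v => by
        rw [proj, flagPush]
        simp [h0]
      simp [this] at hsp
    obtain ⟨w, hw, hMw⟩ := (flagPush_flagSum_ne_zero_iff hx0).1 hM
    have hMσ : M = σ := by
      refine ((h w hw).1.4 M hMw).antisymm fun v hv => ?_
      obtain ⟨τ, hvτ, hτ⟩ := (flagPush_ne_zero_iff hw2.nonneg).1 (hne v hv)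
      exact hmax τ hτ hvτ
    exact (h w hw).2 (hMσ ▸ hMw)

omit [Fintype V] [DecidableEq V] in
lemma range_coe_preimage {X : Type*} {S T : Set (Vert p V)} (hST : S ⊆ T)
    {f : (orderComplex T).space → X} {B : Set X}
    (h : ∀ x, f x ∈ B ↔ ∀ w, x.1 w ≠ 0 → w ∈ S) :
    range (fun x : f ⁻¹' B => x.1.1) = (orderComplex S).space := by
  ext x
  constructor
  · rintro ⟨⟨x, hx⟩, rfl⟩
    have := mem_orderComplex_space.1 x.2
    exact mem_orderComplex_space.2 ⟨this.1, this.2.1, (h x).1 hx, this.2.2.2⟩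
  · intro hx
    have hx' := mem_orderComplex_space.1 hx
    exact ⟨⟨⟨x, mem_orderComplex_space.2
      ⟨hx'.1, hx'.2.1, fun w hw => hST (hx'.2.2.1 w hw), hx'.2.2.2⟩⟩, (h _).2 hx'.2.2.1⟩, rfl⟩

end Resolution

/-- **Lemma 16** (Dranishnikov–West).  For every prime `p` and finite connected simplicial
complex `L` there are an integer `m`, a finite simplicial complex `L̂` and a simplicial
action of `(ℤ/pℤ)^m` on `L̂` whose orbit space is (a subdivision of) `L`, such that the
orbit map `f : L̂ → L` has the property that for each simplex `σ` of `L` the inclusion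
`f⁻¹(∂σ) → f⁻¹(σ)` induces an isomorphism on one-dimensional (co)homology with `ℤ/pℤ`
coefficients.  (With field coefficients `ℤ/pℤ`, an inclusion induces an isomorphism on
`H_1` iff it does on `H¹`; cohomology here is Alexander–Spanier cohomology, which agrees
with Čech and singular cohomology on compact polyhedra.) -/
theorem resolution_iso_H1_on_simplices (p : ℕ) (hp : p.Prime)
    (V : Type) [Fintype V] [DecidableEq V] (K : FinSimpComplex V)
    (hne : K.faces.Nonempty) (hconn : ConnectedSpace K.space) :
    ∃ (m : ℕ) (W : Type) (_ : Fintype W) (_ : DecidableEq W) (Khat : FinSimpComplex W)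
      (ρ : (Fin m → ZMod p) → W ≃ W)
      (hsimp : ∀ a : Fin m → ZMod p, ∀ s ∈ Khat.faces, s.image (ρ a) ∈ Khat.faces)
      (f : ↥Khat.space → ↥K.space),
      -- `ρ` is a simplicial action of `(ℤ/pℤ)^m` on `L̂`:
      (ρ 0 = Equiv.refl W) ∧
      (∀ a b, ρ (a + b) = (ρ a).trans (ρ b)) ∧
      -- `f` is (induced by) the orbit map of the action: it is a continuous surjection
      -- whose fibres are exactly the orbits, so that `L̂/(ℤ/pℤ)^m ≅ L`:
      Continuous f ∧ Function.Surjective f ∧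
      (∀ x y : ↥Khat.space, f x = f y ↔ ∃ a, Khat.permAct (hsimp a) x = y) ∧
      -- (*) for each simplex `σ` of `L`, the inclusion `f⁻¹(∂σ) → f⁻¹(σ)` induces an
      -- isomorphism on one-dimensional (co)homology with `ℤ/pℤ` coefficients:
      (∀ σ ∈ K.faces,
        Function.Bijective
          (AS.ASHmap (ZMod p)
            (continuous_inclusion
              (Set.preimage_mono (K.geomBoundary_subset σ) : 
                f ⁻¹' (K.geomBoundary σ) ⊆ f ⁻¹' (K.geomSimplex σ))) 1)) := by
  classical
  have : NeZero p := ⟨hp.ne_zero⟩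
  let : Fintype (Resolution.Vert p V) := Fintype.ofFinite _
  let : Fintype (Resolution.AltCochain p V) := Fintype.ofFinite _
  obtain ⟨σ₀, hσ₀⟩ := hne
  obtain ⟨v₀, -⟩ := K.nonempty_of_mem σ₀ hσ₀
  have : Nonempty (Resolution.Vert p V) := ⟨Resolution.mk ∅ v₀ 0⟩
  let e := Fintype.equivFin (Finset V × Resolution.AltCochain p V)
  let G : (Fin (Fintype.card (Finset V × Resolution.AltCochain p V)) → ZMod p) →
    Finset V → Resolution.Coeff p V := fun a τ α => a (e (τ, α))
  have hG : Surjective G := fun g => ⟨fun i => g (e.symm i).1 (e.symm i).2, by simp [G]⟩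
  have hsimp : ∀ a, ∀ s ∈ (orderComplex (Resolution.Verts p K)).faces,
      s.image (Resolution.actEquiv (G a)) ∈ (orderComplex (Resolution.Verts p K)).faces := by
    intro a s hs
    rw [mem_orderComplex] at hs ⊢
    obtain ⟨h1, h2, h3⟩ := hs
    refine ⟨h1.image _, fun w hw => ?_, ?_⟩
    · obtain ⟨u, hu, rfl⟩ := Finset.mem_image.1 hw
      obtain ⟨σ, hσ, hwσ⟩ := h2 u hu
      exact ⟨σ, hσ, Resolution.act_mem_over _ hwσ⟩
    · rw [Finset.coe_image]
      exact h3.image_of_map_rel _ _ _ fun _ _ h => Resolution.act_mono _ h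
  let f : ↥(orderComplex (Resolution.Verts p K)).space → ↥K.space :=
    fun x => ⟨Resolution.proj x.1, Resolution.proj_mem_space x.2⟩
  refine ⟨_, Resolution.Vert p V, inferInstance, inferInstance,
    orderComplex (Resolution.Verts p K), fun a => Resolution.actEquiv (G a), hsimp, f,
    Equiv.ext Resolution.act_zero, fun a b => Equiv.ext fun w =>
      (Resolution.act_act (G a) (G b) w).symm, ?_, ?_, fun x y => ?_, fun σ hσ => ?_⟩
  · exact (Resolution.continuous_proj.comp continuous_subtype_val).subtype_mk _
  · rintro ⟨y, hy⟩
    obtain ⟨x, hx, h⟩ := Resolution.exists_proj_eq (p := p) hy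
    exact ⟨⟨x, hx⟩, Subtype.ext h⟩
  · constructor
    · intro h
      obtain ⟨g, hg⟩ := Resolution.exists_act_of_proj_eq x.2 y.2 (congrArg Subtype.val h)
      obtain ⟨a, rfl⟩ := hG g
      exact ⟨a, Subtype.ext hg⟩
    · rintro ⟨a, rfl⟩
      refine Subtype.ext ?_
      change Resolution.proj x.1 = Resolution.proj fun w => x.1 (Resolution.act (-G a) w)
      rw [Resolution.proj, Resolution.proj, Resolution.flagSum_comp_act]
  · have hover : Resolution.Over σ ⊆ Resolution.Verts p K := fun w hw => ⟨σ, hσ, hw⟩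
    refine bijective_ASHmap_one_orderComplex (S := Resolution.OverBdry σ)
      (T := Resolution.Over σ) (ι := fun x => x.1.1) (κ := fun x => x.1.1) (fun w hw => hw.1) _
      (fun _ => rfl) (.comp .subtypeVal .subtypeVal)
      (Resolution.range_coe_preimage (f := f) (B := K.geomBoundary σ) (fun w hw => hover hw.1)
        fun x => Resolution.proj_boundary_iff x.2)
      (.comp .subtypeVal .subtypeVal)
      (Resolution.range_coe_preimage (f := f) (B := K.geomSimplex σ) hover
        fun x => Resolution.proj_support_subset_iff x.2)
      (fun a ha h hh => Resolution.overBdry_coboundary_extends (K.nonempty_of_mem σ hσ) ha hh)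
      fun a ha => Resolution.overBdry_cocycle_extends ha
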